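/- arXiv:1009.6023 — 2 statements merged into one kernel-verified Lean document; each statement's English description precedes it below -/
import Mathlib

section
/- Let $d \geq 1$ and let $1 \leq i_1 \leq i_2 \leq i_3 \leq d$ be integers. There exists an integral polytope $\mathcal{P} \subset \mathbb{R}^d$ of dimension $d$ whose $\delta$-polynomial equals $1 + t^{i_1} + t^{i_2} + t^{i_3}$ if and only if $(i_1,i_2,i_3)$ satisfies $i_3 \leq i_1 + i_2$, $i_1 + i_3 \leq d+1$, $i_2 \leq \lfloor (d+1)/2 \rfloor$, and additionally ($2i_2 \leq i_1 + i_3$ or $i_2 + i_3 \leq d+1$). Moreover, in the affirmative case the polytope can be chosen to be an integral simplex. -/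
open Set Pointwise

/-- The number of lattice points in the `n`-th dilation of `P ⊆ ℝ^N`. -/
noncomputable def ehr {N : ℕ} (P : Set (Fin N → ℝ)) (n : ℕ) : ℕ :=
  Set.ncard {x : Fin N → ℤ | (fun i => (x i : ℝ)) ∈ (n : ℝ) • P}

/-- The `i`-th coefficient of `(1-λ)^(d+1) * (1 + ∑_{n ≥ 1} i(P,n) λ^n)`,
i.e. the `i`-th entry of the δ-vector of a `d`-dimensional integral polytope. -/
noncomputable def deltaVec {N : ℕ} (P : Set (Fin N → ℝ)) (d i : ℕ) : ℤ :=
  ∑ j ∈ Finset.range (i + 1),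
    (-1 : ℤ) ^ (i - j) * (Nat.choose (d + 1) (i - j) : ℤ) * (ehr P j : ℤ)

/-- `P ⊆ ℝ^N` is an integral polytope of dimension `d`. -/
def IsIntegralPolytope {N : ℕ} (P : Set (Fin N → ℝ)) (d : ℕ) : Prop :=
  ∃ V : Finset (Fin N → ℤ), V.Nonempty ∧
    P = convexHull ℝ ((fun v i => ((v i : ℝ))) '' (V : Set (Fin N → ℤ))) ∧
    Module.finrank ℝ (vectorSpan ℝ P) = d

/-!
A lattice polytope with vertices `v i` is homogenized to the cone over the points `(v i, 1)`, and
`δ` is read off a decomposition of this cone into half-open simplicial cones: the lattice points of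
such a cone are the points of its half-open fundamental parallelepiped plus nonnegative integer
combinations of the generators, so each box point of height `h` contributes `t ^ h`. Reflecting the
boxes through their centres replaces `h` by `d + 1 - h` and counts interior points instead.

For a simplex of normalized volume four, the box points modulo the vertices form a group of order
four. Adding two box points and taking fractional parts of the coordinates does not increase the
sum of the heights, and this yields the inequalities both for the cyclic group and for the Klein
group. If there are more than `d + 1` vertices, then `i₁ = 1`, and comparing consecutive interior
slices gives `i₃ ≤ i₂ + 1`. When moreover `i₂ ≥ 3`, there are exactly `d + 2` vertices, satisfying a
single relation `v i + v j = v i' + v j'`; the first lattice point that is not a sum of vertices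
has height `i₂`, and reflecting it yields another such point at height `d + 1 - i₂`, whence
`2 * i₂ ≤ d + 1`.

Conversely, every admissible triple is realized by a simplex whose box points form a cyclic group of
order four, with suitable multiplicities of the residues `1`, `2`, `3` among the coordinates of a
generator.
-/

/-! ### Half-open simplicial cones -/

/-- The coefficient of `t ^ n` in the power series of `t ^ h / (1 - t) ^ k`. -/
def shiftedMultichoose (k h n : ℕ) : ℕ := if h ≤ n then k.multichoose (n - h) else 0

lemma shiftedMultichoose_self (k h : ℕ) : shiftedMultichoose k h h = 1 := by
  simp [shiftedMultichoose]

lemma shiftedMultichoose_succ (k h : ℕ) : shiftedMultichoose k h (h + 1) = k := by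
  simp [shiftedMultichoose]

lemma shiftedMultichoose_of_lt (k : ℕ) {h n : ℕ} (hn : n < h) : shiftedMultichoose k h n = 0 :=
  if_neg hn.not_ge

lemma card_piAntidiag {κ : Type*} [DecidableEq κ] (s : Finset κ) (n : ℕ) :
    (s.piAntidiag n).card = s.card.multichoose n := by
  rw [← Finset.card_finsuppAntidiag_nat_eq_multichoose, Finset.finsuppAntidiag, Finset.card_map,
    Finset.card_attach]

lemma floor_eq_of_nonneg_of_isInt {a : ℝ} (ha : ∃ m : ℤ, a = m) (h0 : 0 ≤ a) :
    (⌊a⌋₊ : ℝ) = a := by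
  obtain ⟨m, rfl⟩ := ha
  lift m to ℕ using Int.cast_nonneg_iff.1 h0
  simp

section HalfOpenCone

variable {E κ : Type*} [AddCommGroup E] [Module ℝ E] {Λ : AddSubgroup E}

/-- The simplicial cone spanned by the basis `b`, without the facets opposite to the basis
vectors outside `s`. -/
def halfOpenCone (b : Module.Basis κ ℝ E) (s : Set κ) : Set E :=
  {x | ∀ i, 0 ≤ b.repr x i ∧ (b.repr x i = 0 → i ∈ s)}

/-- The fundamental parallelepiped of the points of `Λ` in `halfOpenCone b s`: the coordinates
lie in `[0, 1)` for the indices in `s` and in `(0, 1]` for the others. -/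
def halfOpenBox (Λ : AddSubgroup E) (b : Module.Basis κ ℝ E) (s : Set κ) : Set E :=
  {x | x ∈ Λ ∧ ∀ i, 0 ≤ b.repr x i ∧ b.repr x i ≤ 1 ∧
    (b.repr x i = 0 → i ∈ s) ∧ (b.repr x i = 1 → i ∉ s)}

lemma halfOpenBox_subset_halfOpenCone (b : Module.Basis κ ℝ E) (s : Set κ) :
    halfOpenBox Λ b s ⊆ halfOpenCone b s :=
  fun _ hx i => ⟨(hx.2 i).1, (hx.2 i).2.2.1⟩

variable {l : E →ₗ[ℝ] ℝ} {b : Module.Basis κ ℝ E} {s : Set κ}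

lemma linearMap_eq_sum_repr [Fintype κ] (hl : ∀ i, l (b i) = 1) (x : E) :
    l x = ∑ i, b.repr x i := by
  conv_lhs => rw [← b.sum_repr x, map_sum]
  simp only [map_smul, hl, smul_eq_mul, mul_one]

lemma linearMap_nonneg_of_mem_halfOpenCone [Finite κ] (hl : ∀ i, l (b i) = 1) {x : E}
    (hx : x ∈ halfOpenCone b s) : 0 ≤ l x := by
  have := Fintype.ofFinite κ
  exact (linearMap_eq_sum_repr hl x).symm ▸ Finset.sum_nonneg fun i _ => (hx i).1

variable [Fintype κ]

lemma linearMap_lt_card_of_mem_halfOpenBox (hl : ∀ i, l (b i) = 1) (hs : s.Nonempty) {x : E}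
    (hx : x ∈ halfOpenBox Λ b s) : l x < Fintype.card κ := by
  obtain ⟨i, hi⟩ := hs
  have hlt : ∑ j, b.repr x j < ∑ _j : κ, (1 : ℝ) :=
    Finset.sum_lt_sum (fun j _ => (hx.2 j).2.1)
      ⟨i, Finset.mem_univ i, (hx.2 i).2.1.lt_of_ne fun h => (hx.2 i).2.2.2 h hi⟩
  simpa [linearMap_eq_sum_repr hl] using hlt

lemma sum_basis_sub_mem_halfOpenBox_compl (hb : ∀ i, b i ∈ Λ) {x : E}
    (hx : x ∈ halfOpenBox Λ b s) : ∑ i, b i - x ∈ halfOpenBox Λ b sᶜ := by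
  refine ⟨sub_mem (sum_mem fun i _ => hb i) hx.1, fun i => ?_⟩
  have hrepr : b.repr (∑ j, b j - x) i = 1 - b.repr x i := by simp
  obtain ⟨h0, h1, h0s, h1s⟩ := hx.2 i
  rw [hrepr]
  exact ⟨by linarith, by linarith, fun h => h1s (by linarith),
    fun h => not_not.2 (h0s (by linarith))⟩

lemma repr_add_sum_nsmul (b : Module.Basis κ ℝ E) (x : E) (f : κ → ℕ) (i : κ) :
    b.repr (x + ∑ j, f j • b j) i = b.repr x i + f i := by
  classical simp [Finsupp.single_apply]

lemma exists_mem_halfOpenBox_add_sum_eq (hb : ∀ i, b i ∈ Λ) {x : E} (hx : x ∈ Λ)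
    (hxc : x ∈ halfOpenCone b s) :
    ∃ β ∈ halfOpenBox Λ b s, ∃ f : κ → ℕ, β + ∑ i, f i • b i = x := by
  have hcoord : ∀ i, ∃ m : ℕ, 0 ≤ b.repr x i - m ∧ b.repr x i - m ≤ 1 ∧
      (b.repr x i - m = 0 → i ∈ s) ∧ (b.repr x i - m = 1 → i ∉ s) := by
    intro i
    obtain ⟨h0, h0s⟩ := hxc i
    by_cases hi : i ∈ s
    · have hlt := Nat.lt_floor_add_one (b.repr x i)
      exact ⟨⌊b.repr x i⌋₊, by linarith [Nat.floor_le h0], by linarith, fun _ => hi,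
        fun h => by linarith⟩
    · have hpos : 0 < ⌈b.repr x i⌉₊ := Nat.ceil_pos.2 (h0.lt_of_ne fun h => hi (h0s h.symm))
      have hle := Nat.le_ceil (b.repr x i)
      have hlt := Nat.ceil_lt_add_one h0
      refine ⟨⌈b.repr x i⌉₊ - 1, ?_⟩
      rw [Nat.cast_pred hpos]
      exact ⟨by linarith, by linarith, fun h => by linarith, fun _ => hi⟩
  choose f hf using hcoord
  have hadd : x - ∑ i, f i • b i + ∑ i, f i • b i = x := sub_add_cancel _ _
  refine ⟨x - ∑ i, f i • b i,
    ⟨sub_mem hx (sum_mem fun i _ => nsmul_mem (hb i) _), fun i => ?_⟩, f, hadd⟩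
  have hrepr : b.repr (x - ∑ i, f i • b i) i = b.repr x i - f i := by
    rw [eq_sub_iff_add_eq, ← repr_add_sum_nsmul, hadd]
  rw [hrepr]
  exact hf i

lemma eq_of_mem_halfOpenBox_of_add_sum_eq {β β' : E} (hβ : β ∈ halfOpenBox Λ b s)
    (hβ' : β' ∈ halfOpenBox Λ b s) {f f' : κ → ℕ}
    (h : β + ∑ i, f i • b i = β' + ∑ i, f' i • b i) : f = f' := by
  funext i
  have heq : b.repr β i + f i = b.repr β' i + f' i := by
    rw [← repr_add_sum_nsmul, ← repr_add_sum_nsmul, h]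
  obtain ⟨h0, h1, h0s, h1s⟩ := hβ.2 i
  obtain ⟨h0', h1', h0s', h1s'⟩ := hβ'.2 i
  rcases lt_trichotomy (f i) (f' i) with hlt | hff | hlt
  · have : (f i : ℝ) + 1 ≤ f' i := mod_cast hlt
    exact absurd (h0s' (by linarith)) (h1s (by linarith))
  · exact hff
  · have : (f' i : ℝ) + 1 ≤ f i := mod_cast hlt
    exact absurd (h0s (by linarith)) (h1s' (by linarith))

lemma setOf_mem_halfOpenCone_eq_image [DecidableEq κ] (hb : ∀ i, b i ∈ Λ) (hl : ∀ i, l (b i) = 1)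
    (hint : ∀ x ∈ Λ, ∃ m : ℤ, l x = m) (n : ℕ) :
    {x | x ∈ Λ ∧ l x = n ∧ x ∈ halfOpenCone b s} =
      (fun p : Σ _ : E, κ → ℕ => p.1 + ∑ i, p.2 i • b i) ''
        {p | p.1 ∈ halfOpenBox Λ b s ∧ ⌊l p.1⌋₊ ≤ n ∧
          p.2 ∈ Finset.piAntidiag Finset.univ (n - ⌊l p.1⌋₊)} := by
  have hfloor : ∀ β ∈ halfOpenBox Λ b s, (⌊l β⌋₊ : ℝ) = l β := fun β hβ =>
    floor_eq_of_nonneg_of_isInt (hint β hβ.1)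
      (linearMap_nonneg_of_mem_halfOpenCone hl (halfOpenBox_subset_halfOpenCone b s hβ))
  have hadd : ∀ β ∈ halfOpenBox Λ b s, ∀ f : κ → ℕ,
      l (β + ∑ i, f i • b i) = n ↔ ⌊l β⌋₊ + ∑ i, f i = n := fun β hβ f => by
    rw [← Nat.cast_inj (R := ℝ), Nat.cast_add, hfloor β hβ]
    simp [hl]
  ext x
  simp only [mem_image, Sigma.exists, mem_ofPred_eq, Finset.mem_piAntidiag, Finset.mem_univ,
    implies_true, and_true]
  constructor
  · rintro ⟨hx, hn, hxc⟩
    obtain ⟨β, hβ, f, rfl⟩ := exists_mem_halfOpenBox_add_sum_eq hb hx hxc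
    have := (hadd β hβ f).1 hn
    exact ⟨β, f, ⟨hβ, by lia, by lia⟩, rfl⟩
  · rintro ⟨β, f, ⟨hβ, hle, hf⟩, rfl⟩
    refine ⟨add_mem hβ.1 (sum_mem fun i _ => nsmul_mem (hb i) _), (hadd β hβ f).2 (by lia),
      fun i => ?_⟩
    rw [repr_add_sum_nsmul]
    obtain ⟨h0, -, h0s, -⟩ := hβ.2 i
    exact ⟨by positivity, fun h => h0s (by linarith [(f i).cast_nonneg (α := ℝ)])⟩

theorem ncard_setOf_mem_halfOpenCone (hb : ∀ i, b i ∈ Λ) (hl : ∀ i, l (b i) = 1)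
    (hint : ∀ x ∈ Λ, ∃ m : ℤ, l x = m) (hfin : (halfOpenBox Λ b s).Finite) (n : ℕ) :
    {x | x ∈ Λ ∧ l x = n ∧ x ∈ halfOpenCone b s}.ncard =
      ∑ β ∈ hfin.toFinset, shiftedMultichoose (Fintype.card κ) ⌊l β⌋₊ n := by
  classical
  let F : E → Finset (κ → ℕ) := fun β =>
    if ⌊l β⌋₊ ≤ n then Finset.piAntidiag Finset.univ (n - ⌊l β⌋₊) else ∅
  have hF : {p : Σ _ : E, κ → ℕ | p.1 ∈ halfOpenBox Λ b s ∧ ⌊l p.1⌋₊ ≤ n ∧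
      p.2 ∈ Finset.piAntidiag Finset.univ (n - ⌊l p.1⌋₊)} = (hfin.toFinset.sigma F :) := by
    ext p
    by_cases h : ⌊l p.1⌋₊ ≤ n <;> simp [F, h]
  rw [setOf_mem_halfOpenCone_eq_image hb hl hint, InjOn.ncard_image, hF, ncard_coe_finset,
    Finset.card_sigma]
  · refine Finset.sum_congr rfl fun β _ => ?_
    simp only [F, shiftedMultichoose]
    split_ifs
    · rw [card_piAntidiag, Finset.card_univ]
    · rfl
  · rintro ⟨β, f⟩ ⟨hβ, -⟩ ⟨β', f'⟩ ⟨hβ', -⟩ h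
    obtain rfl := eq_of_mem_halfOpenBox_of_add_sum_eq hβ hβ' h
    obtain rfl : β = β' := add_right_cancel h
    rfl

end HalfOpenCone

/-! ### Lexicographic triangulations -/

section Lex

variable {N : ℕ}

theorem exists_isLexMin_of_isCompact {K : Set (Fin N → ℝ)} (hK : IsCompact K) (hne : K.Nonempty) :
    ∃ c ∈ K, ∀ c' ∈ K, toLex c ≤ toLex c' := by
  induction N with
  | zero => exact hne.imp fun c hc => ⟨hc, fun c' _ => (congrArg toLex (Subsingleton.elim c c')).le⟩
  | succ N ih =>
    have h_zero : Continuous fun c : Fin (N + 1) → ℝ => c 0 := continuous_apply 0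
    have h_tail : Continuous (Fin.tail : (Fin (N + 1) → ℝ) → Fin N → ℝ) :=
      continuous_pi fun i => continuous_apply i.succ
    obtain ⟨a, ha, hmin⟩ := hK.exists_isMinOn hne h_zero.continuousOn
    obtain ⟨_, ⟨c, ⟨hc, hca⟩, rfl⟩, hlex⟩ :=
      ih (K := Fin.tail '' (K ∩ {c | c 0 = a 0}))
        ((hK.inter_right (isClosed_eq h_zero continuous_const)).image h_tail)
        (.image _ ⟨a, ha, rfl⟩)
    refine ⟨c, hc, fun c' hc' => not_lt.1 fun hlt => ?_⟩
    rw [← Fin.cons_self_tail c, ← Fin.cons_self_tail c'] at hlt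
    rcases (Fin.pi_lex_lt_cons_cons _).1 hlt with h | ⟨h, htail⟩
    · exact (h.trans_eq hca).not_ge (hmin hc')
    · exact (hlex _ ⟨c', ⟨hc', h.trans hca⟩, rfl⟩).not_gt htail

lemma toLex_nonneg_of_smul {c : Fin N → ℝ} {r : ℝ} (hr : 0 < r) (h : 0 ≤ toLex (r • c)) :
    0 ≤ toLex c := by
  refine not_lt.1 fun hlt => h.not_gt ?_
  obtain ⟨i, heq, hi⟩ := hlt
  exact ⟨i, fun j hj => mul_eq_zero_of_right r (heq j hj), mul_neg_of_pos_of_neg hr hi⟩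

end Lex

section Perturbation

open Filter Topology

variable {a z : ℝ}

lemma eventually_add_mul_pos (ha : 0 ≤ a) (h : a = 0 → 0 < z) :
    ∀ᶠ r in 𝓝[>] (0 : ℝ), 0 < a + r * z := by
  rcases ha.eq_or_lt with rfl | ha
  · filter_upwards [self_mem_nhdsWithin] with r hr
    simpa using mul_pos hr (h rfl)
  · have hcont : ContinuousAt (fun r : ℝ => a + r * z) 0 := by fun_prop
    exact (hcont.eventually_const_lt (by simpa using ha)).filter_mono nhdsWithin_le_nhds

lemma eventually_add_mul_nonneg (ha : 0 ≤ a) (h : a = 0 → 0 ≤ z) :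
    ∀ᶠ r in 𝓝[>] (0 : ℝ), 0 ≤ a + r * z := by
  rcases ha.eq_or_lt with rfl | ha
  · filter_upwards [self_mem_nhdsWithin] with r hr
    simpa using mul_nonneg (le_of_lt hr) (h rfl)
  · exact (eventually_add_mul_pos ha.le fun h0 => absurd h0 ha.ne').mono fun r => le_of_lt

lemma eventually_add_mul_neg (hz : z ≠ 0) (h : ¬(0 ≤ a ∧ (a = 0 → 0 < z))) :
    ∀ᶠ r in 𝓝[>] (0 : ℝ), a + r * z < 0 := by
  have ha : a ≤ 0 := not_lt.1 fun ha => h ⟨ha.le, fun h0 => absurd h0 ha.ne'⟩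
  have hneg : -a = 0 → 0 < -z := fun h0 =>
    neg_pos.2 (hz.lt_of_le (not_lt.1 fun hz' => h ⟨(neg_eq_zero.1 h0).ge, fun _ => hz'⟩))
  filter_upwards [eventually_add_mul_pos (neg_nonneg.2 ha) hneg] with r hr
  linarith

end Perturbation

section Triangulation

open Filter Topology

variable {E : Type*} [AddCommGroup E] [Module ℝ E]

lemma mem_hull_range_iff {ι : Type*} [Fintype ι] {v : ι → E} {x : E} :
    x ∈ PointedCone.hull ℝ (range v) ↔ ∃ c : ι → ℝ, (∀ i, 0 ≤ c i) ∧ ∑ i, c i • v i = x := by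
  rw [PointedCone.hull, Submodule.mem_span_range_iff_exists_fun]
  exact ⟨fun ⟨c, hc⟩ => ⟨fun i => c i, fun i => (c i).2, hc⟩,
    fun ⟨c, h0, hc⟩ => ⟨fun i => ⟨c i, h0 i⟩, hc⟩⟩

lemma linearMap_nonneg_of_mem_hull {ι : Type*} [Finite ι] {v : ι → E} {l : E →ₗ[ℝ] ℝ}
    (hl : ∀ i, l (v i) = 1) {x : E} (hx : x ∈ PointedCone.hull ℝ (range v)) : 0 ≤ l x := by
  have := Fintype.ofFinite ι
  obtain ⟨c, hc, rfl⟩ := mem_hull_range_iff.1 hx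
  simpa [hl] using Finset.sum_nonneg fun i _ => hc i

variable {N : ℕ} {v : Fin N → E} {l : E →ₗ[ℝ] ℝ}

/-- A maximal cone of the lexicographic triangulation of the cone over `v`: it is spanned by a
basis contained in `v`, and a representation supported on this basis is lexicographically least
among those with nonnegative coefficients outside it. -/
structure LexCone (v : Fin N → E) where
  index : Finset (Fin N)
  basis : Module.Basis index ℝ E
  basis_apply : ∀ i, basis i = v i
  toLex_nonneg : ∀ c : Fin N → ℝ, ∑ i, c i • v i = 0 → (∀ i ∉ index, 0 ≤ c i) → 0 ≤ toLex c

namespace LexCone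

lemma index_injective : Function.Injective (index : LexCone v → Finset (Fin N)) := by
  rintro ⟨σ, b, hb, -⟩ ⟨τ, b', hb', -⟩ rfl
  obtain rfl : b = b' := Module.Basis.eq_of_apply_eq fun i => (hb i).trans (hb' i).symm
  rfl

instance : Finite (LexCone v) := Finite.of_injective index index_injective

variable (σ τ : LexCone v)

/-- The coordinates of `y` in the basis of a maximal cone, as coefficients for the whole
family `v`. -/
noncomputable def coeff (y : E) (i : Fin N) : ℝ :=
  if h : i ∈ σ.index then σ.basis.repr y ⟨i, h⟩ else 0

lemma coeff_of_notMem (y : E) {i : Fin N} (hi : i ∉ σ.index) : σ.coeff y i = 0 := dif_neg hi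

lemma coeff_nonneg {y : E} (hy : ∀ i, 0 ≤ σ.basis.repr y i) (i : Fin N) : 0 ≤ σ.coeff y i := by
  unfold coeff
  split_ifs
  · exact hy _
  · rfl

lemma coeff_pos_iff {y : E} (hy : ∀ i, 0 < σ.basis.repr y i) (i : Fin N) :
    0 < σ.coeff y i ↔ i ∈ σ.index := by
  by_cases h : i ∈ σ.index <;> simp [coeff, h, hy]

lemma sum_coeff_smul (y : E) : ∑ i, σ.coeff y i • v i = y := by
  rw [← Finset.sum_subset (Finset.subset_univ σ.index)
    fun i _ hi => by rw [σ.coeff_of_notMem y hi, zero_smul], ← Finset.sum_attach]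
  simpa [coeff, σ.basis_apply] using σ.basis.sum_repr y

lemma mem_hull_of_repr_nonneg {x : E} (h : ∀ i, 0 ≤ σ.basis.repr x i) :
    x ∈ PointedCone.hull ℝ (range v) :=
  mem_hull_range_iff.2 ⟨σ.coeff x, σ.coeff_nonneg h, σ.sum_coeff_smul x⟩

variable {σ τ}

lemma toLex_coeff_le {y : E} (hτ : ∀ i, 0 < τ.basis.repr y i) :
    toLex (σ.coeff y) ≤ toLex (τ.coeff y) := by
  refine sub_nonneg.1 (σ.toLex_nonneg (τ.coeff y - σ.coeff y) ?_ fun i hi => ?_)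
  · simp [sub_smul, sum_coeff_smul]
  · simpa [σ.coeff_of_notMem y hi] using τ.coeff_nonneg (fun i => (hτ i).le) i

theorem eq_of_repr_pos {y : E} (hσ : ∀ i, 0 < σ.basis.repr y i)
    (hτ : ∀ i, 0 < τ.basis.repr y i) : σ = τ := by
  have hcoeff : σ.coeff y = τ.coeff y :=
    toLex.injective ((toLex_coeff_le hτ).antisymm (toLex_coeff_le hσ))
  exact index_injective (Finset.ext fun i => by
    rw [← σ.coeff_pos_iff hσ, ← τ.coeff_pos_iff hτ, hcoeff])

end LexCone

/-- The point `y` lies on no hyperplane spanned by vectors of `v`: its coordinates in all bases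
contained in `v` are nonzero. -/
def IsGenericFor (v : Fin N → E) (y : E) : Prop :=
  ∀ (σ : Finset (Fin N)) (b : Module.Basis σ ℝ E), (∀ i, b i = v i) → ∀ i, b.repr y i ≠ 0

instance (σ : Finset (Fin N)) : Subsingleton {b : Module.Basis σ ℝ E // ∀ i, b i = v i} :=
  ⟨fun b b' => Subtype.ext (Module.Basis.eq_of_apply_eq fun i => (b.2 i).trans (b'.2 i).symm)⟩

lemma IsGenericFor.neg {z : E} (hz : IsGenericFor v z) : IsGenericFor v (-z) :=
  fun σ b hb i => by simpa using hz σ b hb i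

lemma exists_basis_of_linearIndepOn {ι : Type*} [Finite ι] {v : ι → E} {τ : Set ι}
    (hspan : Submodule.span ℝ (range v) = ⊤) (hτ : LinearIndepOn ℝ v τ) :
    ∃ σ : Finset ι, τ ⊆ σ ∧ ∃ b : Module.Basis σ ℝ E, ∀ i, b i = v i := by
  obtain ⟨σ, -, hτσ, hspanσ, hσ⟩ := exists_linearIndepOn_extension hτ (subset_univ τ)
  lift σ to Finset ι using σ.toFinite
  have htop : ⊤ ≤ Submodule.span ℝ (range fun i : σ => v i) := by
    rw [← hspan, Submodule.span_le, ← image_univ]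
    exact hspanσ.trans_eq (by rw [image_eq_range]; rfl)
  exact ⟨σ, hτσ, .mk hσ htop, fun i => by simp⟩

lemma isCompact_setOf_nonneg_sum_smul_eq (hl : ∀ i, l (v i) = 1) (y : E) :
    IsCompact {c : Fin N → ℝ | (∀ i, 0 ≤ c i) ∧ ∑ i, c i • v i = y} := by
  rcases eq_empty_or_nonempty {c : Fin N → ℝ | (∀ i, 0 ≤ c i) ∧ ∑ i, c i • v i = y} with
    he | ⟨c₀, -, hc₀⟩
  · rw [he]
    exact isCompact_empty
  -- `E` carries no topology, so closedness is expressed through the kernel of `c ↦ ∑ i, c i • v i`.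
  let L : (Fin N → ℝ) →ₗ[ℝ] E := Fintype.linearCombination ℝ v
  have hset : {c : Fin N → ℝ | (∀ i, 0 ≤ c i) ∧ ∑ i, c i • v i = y} =
      Icc 0 (fun _ => l y) ∩ (fun c => c - c₀) ⁻¹' (LinearMap.ker L : Set (Fin N → ℝ)) := by
    ext c
    have hker : c - c₀ ∈ LinearMap.ker L ↔ ∑ i, c i • v i = y := by
      rw [LinearMap.mem_ker, map_sub, sub_eq_zero, Fintype.linearCombination_apply,
        Fintype.linearCombination_apply, hc₀]
    refine ⟨fun ⟨h0, hc⟩ => ⟨⟨h0, fun i => ?_⟩, hker.2 hc⟩, fun ⟨h0, hc⟩ => ⟨h0.1, hker.1 hc⟩⟩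
    have hly : l y = ∑ i, c i := by simp [← hc, hl]
    exact hly ▸ Finset.single_le_sum (fun i _ => h0 i) (Finset.mem_univ i)
  rw [hset]
  exact isCompact_Icc.inter_right ((Submodule.closed_of_finiteDimensional _).preimage (by fun_prop))

lemma exists_lexMin_representation (hl : ∀ i, l (v i) = 1) {y : E}
    (hy : y ∈ PointedCone.hull ℝ (range v)) :
    ∃ c : Fin N → ℝ, (∀ i, 0 ≤ c i) ∧ ∑ i, c i • v i = y ∧ ∀ k : Fin N → ℝ,
      ∑ i, k i • v i = 0 → (∀ i, c i = 0 → 0 ≤ k i) → 0 ≤ toLex k := by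
  obtain ⟨c, ⟨hc0, hcy⟩, hmin⟩ := exists_isLexMin_of_isCompact
    (isCompact_setOf_nonneg_sum_smul_eq hl y) (mem_hull_range_iff.1 hy)
  refine ⟨c, hc0, hcy, fun k hk hk0 => ?_⟩
  obtain ⟨r, hrk, hr⟩ := ((eventually_all.2 fun i =>
    eventually_add_mul_nonneg (hc0 i) (hk0 i)).and self_mem_nhdsWithin).exists
  refine toLex_nonneg_of_smul hr ((le_add_iff_nonneg_right (toLex c)).1 ?_)
  refine hmin (c + r • k) ⟨fun i => by simpa using hrk i, ?_⟩
  simp [add_smul, Finset.sum_add_distrib, hcy, mul_smul, ← Finset.smul_sum, hk]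

lemma linearIndepOn_of_toLex_nonneg {c : Fin N → ℝ} (h : ∀ k : Fin N → ℝ,
    ∑ i, k i • v i = 0 → (∀ i, c i = 0 → 0 ≤ k i) → 0 ≤ toLex k) :
    LinearIndepOn ℝ v {i | c i ≠ 0} := by
  classical
  rw [← Finset.coe_filter_univ, linearIndepOn_finset_iff]
  intro f hf i hi
  let k : Fin N → ℝ := fun i => if c i ≠ 0 then f i else 0
  have hk : ∑ i, k i • v i = 0 := by simpa [k, Finset.sum_filter, ite_smul] using hf
  have hk0 : ∀ i, c i = 0 → k i = 0 := fun i hi => by simp [k, hi]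
  have hnonneg := h k hk fun i hi => (hk0 i hi).ge
  have hnonpos := h (-k) (by simp [hk]) fun i hi => by simp [hk0 i hi]
  have hkz : k = 0 := toLex.injective (le_antisymm (neg_nonneg.1 hnonpos) hnonneg)
  simpa [k, (Finset.mem_filter.1 hi).2] using congrFun hkz i

theorem IsGenericFor.exists_repr_pos (hl : ∀ i, l (v i) = 1)
    (hspan : Submodule.span ℝ (range v) = ⊤) {y : E} (hgen : IsGenericFor v y)
    (hy : y ∈ PointedCone.hull ℝ (range v)) : ∃ σ : LexCone v, ∀ i, 0 < σ.basis.repr y i := by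
  obtain ⟨c, hc0, hcy, hlex⟩ := exists_lexMin_representation hl hy
  obtain ⟨σ, hcσ, b, hb⟩ :=
    exists_basis_of_linearIndepOn hspan (linearIndepOn_of_toLex_nonneg hlex)
  have hsupp : ∀ i ∉ σ, c i = 0 := fun i hi => not_not.1 fun h => hi (hcσ h)
  have hrepr : ∀ i : σ, b.repr y i = c i := by
    have hsum : y = ∑ j : σ, c j • b j := by
      rw [← hcy, ← Finset.sum_subset (Finset.subset_univ σ)
        fun j _ hj => by rw [hsupp j hj, zero_smul], ← Finset.sum_attach]
      simp [hb]
    exact fun i => by rw [hsum, b.repr_sum_self]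
  have hpos : ∀ i : σ, 0 < b.repr y i := fun i =>
    (hgen σ b hb i).symm.lt_of_le (hrepr i ▸ hc0 i)
  refine ⟨⟨σ, b, hb, fun k hk hk0 => hlex k hk fun i hi => hk0 i fun h => ?_⟩, hpos⟩
  exact (hpos ⟨i, h⟩).ne' ((hrepr ⟨i, h⟩).trans hi)

namespace LexCone

variable {σ τ : LexCone v} {x z : E}

/-- The half-open version of a maximal cone which keeps the facets towards which a generic
direction `z` points: it consists of the points that `z` moves into the interior. -/
def halfOpen (σ : LexCone v) (z : E) : Set E := halfOpenCone σ.basis {i | 0 < σ.basis.repr z i}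

lemma halfOpen_subset_hull (σ : LexCone v) (z : E) :
    σ.halfOpen z ⊆ PointedCone.hull ℝ (range v) :=
  fun _ hx => σ.mem_hull_of_repr_nonneg fun i => (hx i).1

lemma eventually_repr_add_smul_pos (h : x ∈ σ.halfOpen z) :
    ∀ᶠ r in 𝓝[>] (0 : ℝ), ∀ i, 0 < σ.basis.repr (x + r • z) i :=
  eventually_all.2 fun i => by simpa using eventually_add_mul_pos (h i).1 (h i).2

lemma eventually_add_smul_mem_hull (h : x ∈ σ.halfOpen z) :
    ∀ᶠ r in 𝓝[>] (0 : ℝ), x + r • z ∈ PointedCone.hull ℝ (range v) :=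
  (eventually_repr_add_smul_pos h).mono fun _ hr => σ.mem_hull_of_repr_nonneg fun i => (hr i).le

lemma eq_of_mem_halfOpen (hσ : x ∈ σ.halfOpen z) (hτ : x ∈ τ.halfOpen z) : σ = τ :=
  let ⟨_, hrσ, hrτ⟩ :=
    ((eventually_repr_add_smul_pos hσ).and (eventually_repr_add_smul_pos hτ)).exists
  eq_of_repr_pos hrσ hrτ

end LexCone

lemma IsGenericFor.eventually_add_smul {z : E} (hz : IsGenericFor v z) (x : E) :
    ∀ᶠ r in 𝓝[>] (0 : ℝ), IsGenericFor v (x + r • z) := by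
  have hne : ∀ (σ : Finset (Fin N)) (b : {b : Module.Basis σ ℝ E // ∀ i, b i = v i}) (i : σ),
      ∀ᶠ r in 𝓝[>] (0 : ℝ), b.1.repr (x + r • z) i ≠ 0 := fun σ b i => by
    by_cases h : 0 ≤ b.1.repr x i ∧ (b.1.repr x i = 0 → 0 < b.1.repr z i)
    · filter_upwards [eventually_add_mul_pos h.1 h.2] with r hr
      simpa using hr.ne'
    · filter_upwards [eventually_add_mul_neg (hz σ b.1 b.2 i) h] with r hr
      simpa using hr.ne
  filter_upwards [eventually_all.2 fun σ => eventually_all.2 fun b => eventually_all.2 (hne σ b)]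
    with r hr σ b hb i using hr σ ⟨b, hb⟩ i

theorem IsGenericFor.exists_mem_halfOpen (hl : ∀ i, l (v i) = 1)
    (hspan : Submodule.span ℝ (range v) = ⊤) {z : E} (hz : IsGenericFor v z) {x : E}
    (hx : ∀ᶠ r in 𝓝[>] (0 : ℝ), x + r • z ∈ PointedCone.hull ℝ (range v)) :
    ∃ σ : LexCone v, x ∈ σ.halfOpen z := by
  by_contra! hcon
  have hneg : ∀ σ : LexCone v, ∀ᶠ r in 𝓝[>] (0 : ℝ), ∃ i, σ.basis.repr (x + r • z) i < 0 := by
    intro σ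
    obtain ⟨i, hi⟩ := not_forall.1 (hcon σ)
    filter_upwards [eventually_add_mul_neg (hz σ.index σ.basis σ.basis_apply i) hi] with r hr
    exact ⟨i, by simpa using hr⟩
  obtain ⟨r, ⟨hmem, hgen⟩, hr⟩ :=
    ((hx.and (hz.eventually_add_smul x)).and (eventually_all.2 hneg)).exists
  obtain ⟨σ, hσ⟩ := hgen.exists_repr_pos hl hspan hmem
  obtain ⟨i, hi⟩ := hr σ
  exact (hσ i).not_gt hi

end Triangulation

/-! ### Heights and reciprocity -/

section Reciprocity

open Filter Topology

variable {E : Type*} [AddCommGroup E] [Module ℝ E]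

/-- The points of `Λ` at height `n` in the cone over `v`. -/
def coneSlice {ι : Type*} (Λ : AddSubgroup E) (l : E →ₗ[ℝ] ℝ) (v : ι → E) (n : ℕ) : Set E :=
  {x | x ∈ Λ ∧ l x = n ∧ x ∈ PointedCone.hull ℝ (range v)}

/-- The points of `Λ` at height `n` which stay in the cone over `v` when moved slightly in the
direction `-z`. For `z` in the interior of the cone these are the interior points. -/
def interiorSlice {ι : Type*} (Λ : AddSubgroup E) (l : E →ₗ[ℝ] ℝ) (v : ι → E) (z : E) (n : ℕ) :
    Set E :=
  {x | x ∈ Λ ∧ l x = n ∧ ∃ r : ℝ, 0 < r ∧ x - r • z ∈ PointedCone.hull ℝ (range v)}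

variable {N : ℕ} {v : Fin N → E} {Λ : AddSubgroup E} {l : E →ₗ[ℝ] ℝ} {z : E}

lemma finite_setOf_repr_sum_pow_eq_zero {σ : Finset (Fin N)} {b : Module.Basis σ ℝ E}
    (hb : ∀ i, b i = v i) (i : σ) :
    {t : ℝ | b.repr (∑ j : Fin N, t ^ (j : ℕ) • v j) i = 0}.Finite := by
  let p : Polynomial ℝ := ∑ j : Fin N, Polynomial.C (b.repr (v j) i) * Polynomial.X ^ (j : ℕ)
  have hcoeff : p.coeff (i : Fin N) = 1 := by
    simp only [p, Polynomial.finsetSum_coeff, Polynomial.coeff_C_mul, Polynomial.coeff_X_pow]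
    rw [Finset.sum_eq_single (i : Fin N)]
    · simp [← hb]
    · intro j _ hj
      rw [if_neg (fun h => hj (Fin.ext h.symm)), mul_zero]
    · simp
  have hp : p ≠ 0 := fun h => by simp [h] at hcoeff
  refine (p.rootSet_finite ℝ).subset fun t ht => Polynomial.mem_rootSet.2 ⟨hp, ?_⟩
  have hrepr : ∑ j : Fin N, t ^ (j : ℕ) * b.repr (v j) i = 0 := by simpa using ht
  rw [← hrepr]
  simp only [p, map_sum, map_mul, Polynomial.aeval_C, map_pow, Polynomial.aeval_X,
    Algebra.algebraMap_self, RingHom.id_apply, mul_comm]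

theorem exists_pos_isGenericFor (v : Fin N → E) :
    ∃ c : Fin N → ℝ, (∀ i, 0 < c i) ∧ IsGenericFor v (∑ i, c i • v i) := by
  let bad : Set ℝ := ⋃ (σ : Finset (Fin N)) (b : {b : Module.Basis σ ℝ E // ∀ i, b i = v i})
    (i : σ), {t : ℝ | b.1.repr (∑ j : Fin N, t ^ (j : ℕ) • v j) i = 0}
  have hbad : bad.Finite := finite_iUnion fun σ => finite_iUnion fun b => finite_iUnion fun i =>
    finite_setOf_repr_sum_pow_eq_zero b.2 i
  obtain ⟨t, ht0, ht⟩ := ((Ioi_infinite (0 : ℝ)).sdiff hbad).nonempty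
  exact ⟨fun j => t ^ (j : ℕ), fun j => pow_pos ht0 _, fun σ b hb i h =>
    ht (mem_iUnion.2 ⟨σ, mem_iUnion.2 ⟨⟨b, hb⟩, mem_iUnion.2 ⟨i, h⟩⟩⟩)⟩

lemma coneSlice_eq_iUnion (hl : ∀ i, l (v i) = 1) (hspan : Submodule.span ℝ (range v) = ⊤)
    (hzc : z ∈ PointedCone.hull ℝ (range v)) (hz : IsGenericFor v z) (n : ℕ) :
    coneSlice Λ l v n = ⋃ σ : LexCone v, {x | x ∈ Λ ∧ l x = n ∧ x ∈ σ.halfOpen z} := by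
  ext x
  simp only [coneSlice, mem_iUnion, mem_ofPred_eq]
  constructor
  · rintro ⟨hx, hn, hxc⟩
    obtain ⟨σ, hσ⟩ := hz.exists_mem_halfOpen hl hspan (x := x) (by
      filter_upwards [self_mem_nhdsWithin] with r hr
      exact add_mem hxc (PointedCone.smul_mem _ (le_of_lt hr) hzc))
    exact ⟨σ, hx, hn, hσ⟩
  · rintro ⟨σ, hx, hn, hxσ⟩
    exact ⟨hx, hn, σ.halfOpen_subset_hull z hxσ⟩

lemma interiorSlice_eq_iUnion (hl : ∀ i, l (v i) = 1) (hspan : Submodule.span ℝ (range v) = ⊤)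
    (hzc : z ∈ PointedCone.hull ℝ (range v)) (hz : IsGenericFor v z) (n : ℕ) :
    interiorSlice Λ l v z n = ⋃ σ : LexCone v, {x | x ∈ Λ ∧ l x = n ∧ x ∈ σ.halfOpen (-z)} := by
  ext x
  simp only [interiorSlice, mem_iUnion, mem_ofPred_eq]
  constructor
  · rintro ⟨hx, hn, r, hr, hxr⟩
    obtain ⟨σ, hσ⟩ := hz.neg.exists_mem_halfOpen hl hspan (x := x) (by
      filter_upwards [Ioo_mem_nhdsGT hr] with s hs
      have hsplit : x + s • -z = (x - r • z) + (r - s) • z := by module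
      rw [hsplit]
      exact add_mem hxr (PointedCone.smul_mem _ (sub_nonneg.2 hs.2.le) hzc))
    exact ⟨σ, hx, hn, hσ⟩
  · rintro ⟨σ, hx, hn, hxσ⟩
    obtain ⟨r, hr, hr0⟩ :=
      ((LexCone.eventually_add_smul_mem_hull hxσ).and self_mem_nhdsWithin).exists
    exact ⟨hx, hn, r, hr0, by simpa [sub_eq_add_neg] using hr⟩

lemma finite_halfOpenBox {κ : Type*} [Finite κ] {b : Module.Basis κ ℝ E} (s : Set κ)
    (hl : ∀ i, l (b i) = 1) (hint : ∀ x ∈ Λ, ∃ m : ℤ, l x = m)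
    (hfin : ∀ n, (coneSlice Λ l b n).Finite) : (halfOpenBox Λ b s).Finite := by
  have := Fintype.ofFinite κ
  refine ((finite_Iic (Fintype.card κ)).biUnion fun n _ => hfin n).subset fun x hx => ?_
  have hnonneg := linearMap_nonneg_of_mem_halfOpenCone hl (halfOpenBox_subset_halfOpenCone b s hx)
  have hle : l x ≤ Fintype.card κ := by
    simpa [linearMap_eq_sum_repr hl] using
      Finset.sum_le_sum (s := Finset.univ) fun i _ => (hx.2 i).2.1
  exact mem_biUnion (x := ⌊l x⌋₊) (Nat.floor_le_of_le hle)
    ⟨hx.1, (floor_eq_of_nonneg_of_isInt (hint x hx.1) hnonneg).symm,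
      mem_hull_range_iff.2 ⟨b.repr x, fun i => (hx.2 i).1, b.sum_repr x⟩⟩

lemma coneSlice_mono {ι κ : Type*} {v : ι → E} {w : κ → E} (h : range w ⊆ range v) (n : ℕ) :
    coneSlice Λ l w n ⊆ coneSlice Λ l v n :=
  fun _ hx => ⟨hx.1, hx.2.1, Submodule.span_mono h hx.2.2⟩

namespace LexCone

variable (σ : LexCone v)

lemma card_index : Fintype.card σ.index = Module.finrank ℝ E :=
  (Module.finrank_eq_card_basis σ.basis).symm

/-- The box points of the half-open maximal cone `σ.halfOpen z`. -/
def box (Λ : AddSubgroup E) (z : E) : Set E := halfOpenBox Λ σ.basis {i | 0 < σ.basis.repr z i}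

variable {σ}

lemma linearMap_basis (hl : ∀ i, l (v i) = 1) (i : σ.index) : l (σ.basis i) = 1 := by
  rw [σ.basis_apply, hl]

lemma finite_box (hl : ∀ i, l (v i) = 1) (hint : ∀ x ∈ Λ, ∃ m : ℤ, l x = m)
    (hfin : ∀ n, (coneSlice Λ l v n).Finite) (σ : LexCone v) (z : E) : (σ.box Λ z).Finite :=
  finite_halfOpenBox _ (linearMap_basis hl) hint fun n => (hfin n).subset <|
    coneSlice_mono (v := v) (range_subset_iff.2 fun i => ⟨i.1, (σ.basis_apply i).symm⟩) n

lemma linearMap_lt_of_mem_box [Nontrivial E] (hl : ∀ i, l (v i) = 1)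
    (hzc : z ∈ PointedCone.hull ℝ (range v)) (hz : IsGenericFor v z) {x : E}
    (hx : x ∈ σ.box Λ z) : l x < Module.finrank ℝ E := by
  rw [← σ.card_index]
  refine linearMap_lt_card_of_mem_halfOpenBox (linearMap_basis hl) ?_ hx
  by_contra! hempty
  have hneg : ∀ i, σ.basis.repr z i < 0 := fun i =>
    (hz _ σ.basis σ.basis_apply i).lt_of_le (not_lt.1 (eq_empty_iff_forall_notMem.1 hempty i))
  have : Nonempty σ.index := σ.basis.index_nonempty
  refine (linearMap_nonneg_of_mem_hull hl hzc).not_gt ?_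
  rw [linearMap_eq_sum_repr (linearMap_basis hl)]
  exact Finset.sum_neg (fun i _ => hneg i) Finset.univ_nonempty

lemma floor_linearMap_of_mem_box (hl : ∀ i, l (v i) = 1) (hint : ∀ x ∈ Λ, ∃ m : ℤ, l x = m)
    {x : E} (hx : x ∈ σ.box Λ z) : (⌊l x⌋₊ : ℝ) = l x :=
  floor_eq_of_nonneg_of_isInt (hint x hx.1) (linearMap_nonneg_of_mem_halfOpenCone
    (linearMap_basis hl) (halfOpenBox_subset_halfOpenCone _ _ hx))

lemma sum_basis_sub_mem_box_neg (hv : ∀ i, v i ∈ Λ) (hz : IsGenericFor v z) {x : E}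
    (hx : x ∈ σ.box Λ z) : ∑ i, σ.basis i - x ∈ σ.box Λ (-z) := by
  have hcompl : {i | 0 < σ.basis.repr (-z) i} = {i | 0 < σ.basis.repr z i}ᶜ := by
    ext i
    have hi := hz _ σ.basis σ.basis_apply i
    simp [hi.le_iff_lt]
  rw [box, hcompl]
  exact sum_basis_sub_mem_halfOpenBox_compl (fun i => by rw [σ.basis_apply]; exact hv i) hx

lemma floor_linearMap_sum_basis_sub (hv : ∀ i, v i ∈ Λ) (hl : ∀ i, l (v i) = 1)
    (hint : ∀ x ∈ Λ, ∃ m : ℤ, l x = m) (hz : IsGenericFor v z) {x : E} (hx : x ∈ σ.box Λ z) :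
    ⌊l (∑ i, σ.basis i - x)⌋₊ = Module.finrank ℝ E - ⌊l x⌋₊ := by
  refine Nat.eq_sub_of_add_eq ?_
  rw [← Nat.cast_inj (R := ℝ), Nat.cast_add, floor_linearMap_of_mem_box hl hint hx,
    floor_linearMap_of_mem_box hl hint (sum_basis_sub_mem_box_neg hv hz hx), ← σ.card_index]
  simp [linearMap_basis hl]

lemma sum_box_neg {M : Type*} [AddCommMonoid M] (hv : ∀ i, v i ∈ Λ) (hl : ∀ i, l (v i) = 1)
    (hint : ∀ x ∈ Λ, ∃ m : ℤ, l x = m) (hz : IsGenericFor v z)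
    (hfin : ∀ z, (σ.box Λ z).Finite) (f : ℕ → M) :
    ∑ β ∈ (hfin (-z)).toFinset, f ⌊l β⌋₊ =
      ∑ β ∈ (hfin z).toFinset, f (Module.finrank ℝ E - ⌊l β⌋₊) := by
  symm
  refine Finset.sum_nbij' (∑ i, σ.basis i - ·) (∑ i, σ.basis i - ·) ?_ ?_ (by simp) (by simp) ?_
  · simp only [Finite.mem_toFinset]
    exact fun β => sum_basis_sub_mem_box_neg hv hz
  · simp only [Finite.mem_toFinset]
    exact fun β hβ => neg_neg z ▸ sum_basis_sub_mem_box_neg hv hz.neg hβ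
  · simp only [Finite.mem_toFinset]
    exact fun β hβ => by rw [floor_linearMap_sum_basis_sub hv hl hint hz hβ]

end LexCone

noncomputable instance : Fintype (LexCone v) := Fintype.ofFinite _

lemma ncard_iUnion_halfOpen (hv : ∀ i, v i ∈ Λ) (hl : ∀ i, l (v i) = 1)
    (hint : ∀ x ∈ Λ, ∃ m : ℤ, l x = m) (hfin : ∀ n, (coneSlice Λ l v n).Finite) (z : E) (n : ℕ) :
    (⋃ σ : LexCone v, {x | x ∈ Λ ∧ l x = n ∧ x ∈ σ.halfOpen z}).ncard =
      ∑ σ : LexCone v, ∑ β ∈ (σ.finite_box hl hint hfin z).toFinset,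
        shiftedMultichoose (Module.finrank ℝ E) ⌊l β⌋₊ n := by
  rw [ncard_iUnion_of_finite, finsum_eq_sum_of_fintype]
  · refine Finset.sum_congr rfl fun σ _ => ?_
    rw [← σ.card_index]
    exact ncard_setOf_mem_halfOpenCone (fun i => by rw [σ.basis_apply]; exact hv i)
      (LexCone.linearMap_basis hl) hint (σ.finite_box hl hint hfin z) n
  · exact fun σ => (hfin n).subset fun x hx => ⟨hx.1, hx.2.1, σ.halfOpen_subset_hull z hx.2.2⟩
  · exact fun σ τ hne => disjoint_left.2 fun x hx hx' =>
      hne (LexCone.eq_of_mem_halfOpen hx.2.2 hx'.2.2)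

theorem exists_heights [Nontrivial E] (hv : ∀ i, v i ∈ Λ) (hl : ∀ i, l (v i) = 1)
    (hint : ∀ x ∈ Λ, ∃ m : ℤ, l x = m) (hfin : ∀ n, (coneSlice Λ l v n).Finite)
    (hspan : Submodule.span ℝ (range v) = ⊤) (hzc : z ∈ PointedCone.hull ℝ (range v))
    (hz : IsGenericFor v z) :
    ∃ H : Multiset ℕ, (∀ h ∈ H, h < Module.finrank ℝ E) ∧
      (∀ n, (coneSlice Λ l v n).ncard =
        (H.map fun h => shiftedMultichoose (Module.finrank ℝ E) h n).sum) ∧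
      ∀ n, (interiorSlice Λ l v z n).ncard = (H.map fun h =>
        shiftedMultichoose (Module.finrank ℝ E) (Module.finrank ℝ E - h) n).sum := by
  let B : LexCone v → Finset E := fun σ => (σ.finite_box hl hint hfin z).toFinset
  let H : Multiset ℕ := ∑ σ, (B σ).val.map fun β => ⌊l β⌋₊
  have hsum : ∀ f : ℕ → ℕ, (H.map f).sum = ∑ σ, ∑ β ∈ B σ, f ⌊l β⌋₊ := by
    intro f
    rw [← Multiset.coe_mapAddMonoidHom, map_sum, ← Multiset.coe_sumAddMonoidHom, map_sum]
    refine Finset.sum_congr rfl fun σ _ => ?_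
    simp only [Multiset.coe_mapAddMonoidHom, Multiset.coe_sumAddMonoidHom, Multiset.map_map]
    rfl
  refine ⟨H, fun h hh => ?_, fun n => ?_, fun n => ?_⟩
  · obtain ⟨σ, -, hσ⟩ := Multiset.mem_sum.1 hh
    obtain ⟨β, hβ, rfl⟩ := Multiset.mem_map.1 hσ
    have hβ : β ∈ σ.box Λ z := (Finite.mem_toFinset _).1 hβ
    rw [← Nat.cast_lt (α := ℝ), LexCone.floor_linearMap_of_mem_box hl hint hβ]
    exact LexCone.linearMap_lt_of_mem_box hl hzc hz hβ
  · rw [hsum, coneSlice_eq_iUnion hl hspan hzc hz, ncard_iUnion_halfOpen hv hl hint hfin]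
  · rw [hsum, interiorSlice_eq_iUnion hl hspan hzc hz, ncard_iUnion_halfOpen hv hl hint hfin]
    exact Finset.sum_congr rfl fun σ _ =>
      LexCone.sum_box_neg hv hl hint hz (fun z => σ.finite_box hl hint hfin z)
        fun h => shiftedMultichoose (Module.finrank ℝ E) h n

end Reciprocity

/-! ### The δ-vector as a multiset of heights -/

section Delta

open PowerSeries in
lemma coeff_one_sub_X_pow (k n : ℕ) :
    coeff n ((1 - X : PowerSeries ℤ) ^ k) = (-1) ^ n * k.choose n := by
  have hrescale : (1 - X : PowerSeries ℤ) ^ k =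
      rescale (-1) (((1 + Polynomial.X) ^ k : Polynomial ℤ) : PowerSeries ℤ) := by
    simp [rescale_X, sub_eq_add_neg]
  rw [hrescale, coeff_rescale, Polynomial.coeff_coe, Polynomial.coeff_one_add_X_pow]

open PowerSeries in
lemma mk_shiftedMultichoose_mul_one_sub_X_pow (k h : ℕ) :
    (mk fun n => (shiftedMultichoose k h n : ℤ)) * (1 - X) ^ k = X ^ h := by
  have hmk : (mk fun n => (k.multichoose n : ℤ)) = mk 1 ^ k := by
    rcases k with _ | k
    · ext n
      rcases n with _ | n <;> simp [coeff_one]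
    · rw [mk_one_pow_eq_mk_choose_add]
      ext n
      simp [Nat.multichoose_eq, add_right_comm, Nat.choose_symm_add (a := k)]
  have hshift : (mk fun n => (shiftedMultichoose k h n : ℤ)) =
      X ^ h * mk fun n => (k.multichoose n : ℤ) := by
    ext n
    rw [coeff_X_pow_mul', coeff_mk, coeff_mk, shiftedMultichoose]
    split_ifs <;> simp
  rw [hshift, hmk, mul_assoc, ← mul_pow, mk_one_mul_one_sub_eq_one, one_pow, mul_one]

lemma sum_alternating_choose_mul_shiftedMultichoose (k h m : ℕ) :
    ∑ j ∈ Finset.range (m + 1),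
      (-1 : ℤ) ^ (m - j) * (k.choose (m - j) : ℤ) * (shiftedMultichoose k h j : ℤ) =
      if m = h then 1 else 0 := by
  have hcoeff := congrArg (PowerSeries.coeff m) (mk_shiftedMultichoose_mul_one_sub_X_pow k h)
  rw [PowerSeries.coeff_X_pow, PowerSeries.coeff_mul,
    Finset.Nat.sum_antidiagonal_eq_sum_range_succ_mk] at hcoeff
  simpa only [coeff_one_sub_X_pow, PowerSeries.coeff_mk, mul_comm] using hcoeff

theorem deltaVec_eq_count {N : ℕ} {P : Set (Fin N → ℝ)} {d : ℕ} {H : Multiset ℕ}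
    (h : ∀ n, ehr P n = (H.map fun h => shiftedMultichoose (d + 1) h n).sum) (m : ℕ) :
    deltaVec P d m = H.count m := by
  simp only [deltaVec, h]
  clear h
  induction H using Multiset.induction with
  | empty => simp
  | cons a H ih =>
    simp only [Multiset.map_cons, Multiset.sum_cons, Nat.cast_add, mul_add,
      Finset.sum_add_distrib]
    rw [ih, sum_alternating_choose_mul_shiftedMultichoose, Multiset.count_cons, Nat.cast_add,
      add_comm, Nat.cast_ite, Nat.cast_one, Nat.cast_zero]

end Delta

section Homogenization

variable {ι E : Type*} [AddCommGroup E] [Module ℝ E]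

lemma mk_mem_hull_iff_mem_smul_convexHull [Finite ι] [Nonempty ι] (w : ι → E) {y : E} {r : ℝ}
    (hr : 0 ≤ r) :
    (y, r) ∈ PointedCone.hull ℝ (range fun i => (w i, (1 : ℝ))) ↔
      y ∈ r • convexHull ℝ (range w) := by
  have := Fintype.ofFinite ι
  rw [mem_smul_set]
  constructor
  · rw [mem_hull_range_iff]
    rintro ⟨c, hc, hcy⟩
    obtain ⟨hsum, hcr⟩ : ∑ i, c i • w i = y ∧ ∑ i, c i = r := by
      simpa [Prod.ext_iff, Prod.fst_sum, Prod.snd_sum] using hcy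
    rcases hr.eq_or_lt with rfl | hr
    · rw [Finset.sum_eq_zero_iff_of_nonneg fun i _ => hc i] at hcr
      obtain ⟨x, hx⟩ := (range_nonempty w).convexHull (𝕜 := ℝ)
      refine ⟨x, hx, ?_⟩
      rw [zero_smul, ← hsum, Finset.sum_eq_zero fun i hi => by rw [hcr i hi, zero_smul]]
    · refine ⟨r⁻¹ • y, mem_convexHull_of_exists_fintype (r⁻¹ • c) w
        (fun i => mul_nonneg (inv_nonneg.2 hr.le) (hc i)) ?_ mem_range_self ?_,
        smul_inv_smul₀ hr.ne' y⟩
      · simp [← Finset.mul_sum, hcr, hr.ne']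
      · simp [← hsum, Finset.smul_sum, smul_smul]
  · rintro ⟨x, hx, rfl⟩
    have hx1 : (x, (1 : ℝ)) ∈ PointedCone.hull ℝ (range fun i => (w i, (1 : ℝ))) := by
      refine convexHull_min (t := {x | (x, (1 : ℝ)) ∈ PointedCone.hull ℝ _})
        (range_subset_iff.2 fun i => Submodule.subset_span (mem_range_self i)) ?_ hx
      intro x hx y hy a b ha hb hab
      rw [mem_ofPred_eq] at hx hy ⊢
      simpa [hab] using add_mem (PointedCone.smul_mem _ ha hx) (PointedCone.smul_mem _ hb hy)
    simpa using PointedCone.smul_mem _ hr hx1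

lemma convexIndependent_of_comp_linearMap {F : Type*} [AddCommGroup F] [Module ℝ F] (f : E →ₗ[ℝ] F)
    {w : ι → E} (hw : ConvexIndependent ℝ (f ∘ w)) : ConvexIndependent ℝ w := by
  intro s i hi
  refine hw s i ?_
  rw [image_comp, ← f.image_convexHull]
  exact mem_image_of_mem f hi

end Homogenization

section Lift

variable {ι : Type*} {d : ℕ}

/-- The integer points of `ℝ^d × ℝ`. -/
def intPoints (d : ℕ) : AddSubgroup ((Fin d → ℝ) × ℝ) :=
  (AddSubgroup.pi univ fun _ => (Int.castAddHom ℝ).range).prod (Int.castAddHom ℝ).range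

/-- The vertices of the homogenization of a lattice polytope: the lattice point `v i` is placed at
height `1`. -/
def liftVec (v : ι → Fin d → ℤ) (i : ι) : (Fin d → ℝ) × ℝ := (fun k => (v i k : ℝ), 1)

lemma mem_intPoints {x : (Fin d → ℝ) × ℝ} :
    x ∈ intPoints d ↔ (∀ i, ∃ m : ℤ, x.1 i = m) ∧ ∃ m : ℤ, x.2 = m := by
  simp only [intPoints, AddSubgroup.mem_prod, AddSubgroup.mem_pi, mem_univ, true_implies,
    AddMonoidHom.mem_range, Int.coe_castAddHom, eq_comm]

lemma liftVec_mem_intPoints (v : ι → Fin d → ℤ) (i : ι) : liftVec v i ∈ intPoints d :=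
  mem_intPoints.2 ⟨fun k => ⟨v i k, rfl⟩, 1, by simp [liftVec]⟩

lemma snd_liftVec (v : ι → Fin d → ℤ) (i : ι) :
    LinearMap.snd ℝ (Fin d → ℝ) ℝ (liftVec v i) = 1 := rfl

lemma exists_int_of_mem_intPoints : ∀ x ∈ intPoints d,
    ∃ m : ℤ, LinearMap.snd ℝ (Fin d → ℝ) ℝ x = m := fun _ hx => (mem_intPoints.1 hx).2

lemma span_range_liftVec_eq_top [Nonempty ι] (v : ι → Fin d → ℤ)
    (h : Module.finrank ℝ (vectorSpan ℝ (range fun i k => (v i k : ℝ))) = d) :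
    Submodule.span ℝ (range (liftVec v)) = ⊤ := by
  have htop : vectorSpan ℝ (range fun i k => (v i k : ℝ)) = ⊤ :=
    Submodule.eq_top_of_finrank_eq (by simpa using h)
  have hle : vectorSpan ℝ (range fun i k => (v i k : ℝ)) ≤
      (Submodule.span ℝ (range (liftVec v))).comap (LinearMap.inl ℝ _ ℝ) := by
    rw [vectorSpan_def, Submodule.span_le]
    rintro _ ⟨_, ⟨i, rfl⟩, _, ⟨j, rfl⟩, rfl⟩
    simpa [liftVec, Prod.mk_sub_mk] using
      sub_mem (Submodule.subset_span (R := ℝ) (mem_range_self (f := liftVec v) i))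
        (Submodule.subset_span (mem_range_self j))
  obtain ⟨i⟩ := ‹Nonempty ι›
  refine Submodule.eq_top_iff'.2 fun x => ?_
  have hsplit : x = LinearMap.inl ℝ _ ℝ (x.1 - x.2 • (liftVec v i).1) + x.2 • liftVec v i := by
    ext <;> simp [liftVec]
  rw [hsplit]
  exact add_mem (hle (htop ▸ Submodule.mem_top))
    (Submodule.smul_mem _ _ (Submodule.subset_span ⟨i, rfl⟩))

variable [Finite ι] [Nonempty ι]

lemma coneSlice_liftVec_eq_image (v : ι → Fin d → ℤ) (n : ℕ) :
    coneSlice (intPoints d) (LinearMap.snd ℝ _ ℝ) (liftVec v) n =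
      (fun x : Fin d → ℤ => (fun i => (x i : ℝ), (n : ℝ))) '' {x | (fun i => (x i : ℝ)) ∈
        (n : ℝ) • convexHull ℝ (range fun i k => (v i k : ℝ))} := by
  simp only [← mk_mem_hull_iff_mem_smul_convexHull _ n.cast_nonneg]
  ext x
  constructor
  · rintro ⟨hx, hn, hxc⟩
    choose f hf using (mem_intPoints.1 hx).1
    obtain rfl : x = (fun i => (f i : ℝ), (n : ℝ)) := Prod.ext (funext hf) hn
    exact ⟨f, hxc, rfl⟩
  · rintro ⟨f, hf, rfl⟩
    exact ⟨mem_intPoints.2 ⟨fun k => ⟨f k, rfl⟩, n, by simp⟩, rfl, hf⟩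

theorem ehr_convexHull_eq_ncard_coneSlice (v : ι → Fin d → ℤ) (n : ℕ) :
    ehr (convexHull ℝ (range fun i k => (v i k : ℝ))) n =
      (coneSlice (intPoints d) (LinearMap.snd ℝ _ ℝ) (liftVec v) n).ncard := by
  rw [coneSlice_liftVec_eq_image, ncard_image_of_injective, ehr]
  exact fun x y h => Int.cast_injective.comp_left (congrArg Prod.fst h)

lemma finite_coneSlice_liftVec (v : ι → Fin d → ℤ) (n : ℕ) :
    (coneSlice (intPoints d) (LinearMap.snd ℝ _ ℝ) (liftVec v) n).Finite := by
  rw [coneSlice_liftVec_eq_image]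
  have hcast := Topology.IsClosedEmbedding.piMap fun _ : Fin d => Int.isClosedEmbedding_coe_real
  refine Finite.image _ (IsCompact.finite_of_discrete ?_)
  exact hcast.isCompact_preimage
    (((finite_range fun i k => (v i k : ℝ)).isCompact_convexHull ℝ).smul (n : ℝ))

end Lift

section Vertices

theorem exists_convexIndependent_of_isIntegralPolytope {d D : ℕ} {P : Set (Fin d → ℝ)}
    (hP : IsIntegralPolytope P D) :
    ∃ N, ∃ v : Fin N → Fin d → ℤ, Nonempty (Fin N) ∧
      P = convexHull ℝ (range fun i k => (v i k : ℝ)) ∧ ConvexIndependent ℝ (liftVec v) := by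
  obtain ⟨V, hV, hP, -⟩ := hP
  have hVfin := (V.finite_toSet.image fun (v : Fin d → ℤ) i => (v i : ℝ))
  have hext : P.extremePoints ℝ ⊆ (fun v i => (v i : ℝ)) '' (V : Set (Fin d → ℤ)) :=
    hP ▸ extremePoints_convexHull_subset
  have hextfin : (P.extremePoints ℝ).Finite := hVfin.subset hext
  have hPhull : convexHull ℝ (P.extremePoints ℝ) = P := by
    rw [← (hextfin.isClosed_convexHull ℝ).closure_eq, closure_convexHull_extremePoints]
    · exact hP ▸ hVfin.isCompact_convexHull ℝ
    · exact hP ▸ convex_convexHull ℝ _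
  have : Finite (P.extremePoints ℝ) := hextfin
  obtain ⟨N, ⟨e⟩⟩ := Finite.exists_equiv_fin (P.extremePoints ℝ)
  choose v _ hv using fun i => hext (e.symm i).2
  have hrange : (range fun i k => (v i k : ℝ)) = P.extremePoints ℝ := by
    rw [show (fun i k => (v i k : ℝ)) = (↑) ∘ e.symm from funext hv,
      e.symm.surjective.range_comp, Subtype.range_coe]
  refine ⟨N, v, ?_, ?_, ?_⟩
  · rw [← range_nonempty_iff_nonempty (f := fun i k => (v i k : ℝ)), hrange,
      ← convexHull_nonempty_iff (𝕜 := ℝ), hPhull, hP]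
    exact (hV.to_set.image _).convexHull
  · rw [hrange, hPhull]
  · refine convexIndependent_of_comp_linearMap (LinearMap.fst ℝ _ ℝ) ?_
    rw [show LinearMap.fst ℝ _ ℝ ∘ liftVec v = (↑) ∘ e.symm from funext hv]
    exact (hP ▸ convex_convexHull ℝ _ : Convex ℝ P).convexIndependent_extremePoints.comp_embedding
      e.symm.toEmbedding

end Vertices

/-! ### Lattice simplices of normalized volume four -/

/-- The numerical conditions of the theorem for a polytope of dimension `D - 1`. -/
def IsAdmissible (D p q r : ℕ) : Prop :=
  r ≤ p + q ∧ p + r ≤ D ∧ q ≤ D / 2 ∧ (2 * q ≤ p + r ∨ q + r ≤ D)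

section FractAdd

variable {κ : Type*} {x y z t u v w : κ → ℝ}

/-- The addition of `(ℝ / ℤ)^κ` on the representatives with coordinates in `[0, 1)`. -/
noncomputable def fractAdd (x y : κ → ℝ) : κ → ℝ := fun i => Int.fract (x i + y i)

lemma fractAdd_apply_eq_or {i : κ} (hx : x i ∈ Ico (0 : ℝ) 1) (hy : y i ∈ Ico (0 : ℝ) 1) :
    fractAdd x y i = x i + y i ∨ fractAdd x y i = x i + y i - 1 := by
  obtain ⟨hx0, hx1⟩ := hx
  obtain ⟨hy0, hy1⟩ := hy
  rcases lt_or_ge (x i + y i) 1 with h | h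
  · exact Or.inl (Int.fract_eq_self.2 ⟨by linarith, h⟩)
  · exact Or.inr (Int.fract_eq_iff.2 ⟨by linarith, by linarith, 1, by simp⟩)

lemma fractAdd_comm (x y : κ → ℝ) : fractAdd x y = fractAdd y x :=
  funext fun _ => by rw [fractAdd, fractAdd, add_comm]

lemma fractAdd_zero (hx : ∀ i, x i ∈ Ico (0 : ℝ) 1) : fractAdd x 0 = x :=
  funext fun i => by rw [fractAdd, Pi.zero_apply, add_zero, Int.fract_eq_self.2 (hx i)]

lemma fractAdd_left_cancel (hy : ∀ i, y i ∈ Ico (0 : ℝ) 1) (hz : ∀ i, z i ∈ Ico (0 : ℝ) 1)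
    (h : fractAdd x y = fractAdd x z) : y = z := by
  funext i
  obtain ⟨m, hm⟩ := Int.fract_eq_fract.1 (congrFun h i)
  rw [← Int.fract_eq_self.2 (hy i), ← Int.fract_eq_self.2 (hz i), Int.fract_eq_fract]
  exact ⟨m, by linarith⟩

lemma fractAdd_eq_zero_or_eq (hx : ∀ i, x i ∈ Ico (0 : ℝ) 1) (hy : ∀ i, y i ∈ Ico (0 : ℝ) 1)
    (hx0 : x ≠ 0) (hy0 : y ≠ 0) (h : fractAdd x y ∈ ({0, x, y, t} : Set (κ → ℝ))) :
    fractAdd x y = 0 ∨ fractAdd x y = t := by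
  have h0 : ∀ i, (0 : κ → ℝ) i ∈ Ico (0 : ℝ) 1 := by simp
  rcases h with h | h | h | h
  · exact Or.inl h
  · exact absurd (fractAdd_left_cancel hy h0 (h.trans (fractAdd_zero hx).symm)) hy0
  · exact absurd (fractAdd_left_cancel hx h0
      ((fractAdd_comm y x).trans (h.trans (fractAdd_zero hy).symm))) hx0
  · exact Or.inr h

lemma sum_le_of_klein [Fintype κ] (hu : ∀ i, u i ∈ Ico (0 : ℝ) 1)
    (hv : ∀ i, v i ∈ Ico (0 : ℝ) 1) (hw : ∀ i, w i ∈ Ico (0 : ℝ) 1) (huv : fractAdd u v = w)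
    (huw : fractAdd u w = v) (hvw : fractAdd v w = u) {p q r : ℕ} (hp : ∑ i, u i = p)
    (hq : ∑ i, v i = q) (hr : ∑ i, w i = r) : r ≤ p + q ∧ p + q + r ≤ Fintype.card κ := by
  have hcoord : ∀ i, w i ≤ u i + v i ∧ u i + v i + w i ≤ 1 := fun i => by
    have := (hw i).1
    have := (hw i).2
    have := (hv i).2
    have := (hu i).2
    have := congrFun huv i
    have := congrFun huw i
    have := congrFun hvw i
    rcases fractAdd_apply_eq_or (hu i) (hv i) with h1 | h1 <;>
    rcases fractAdd_apply_eq_or (hu i) (hw i) with h2 | h2 <;>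
    rcases fractAdd_apply_eq_or (hv i) (hw i) with h3 | h3 <;>
    constructor <;> linarith
  rify
  rw [← hp, ← hq, ← hr]
  constructor
  · simpa only [Finset.sum_add_distrib] using
      Finset.sum_le_sum fun i (_ : i ∈ Finset.univ) => (hcoord i).1
  · simpa [Finset.sum_add_distrib] using
      Finset.sum_le_sum fun i (_ : i ∈ Finset.univ) => (hcoord i).2

lemma sum_le_of_cyclic [Fintype κ] (hu : ∀ i, u i ∈ Ico (0 : ℝ) 1)
    (hv : ∀ i, v i ∈ Ico (0 : ℝ) 1) (hw : ∀ i, w i ∈ Ico (0 : ℝ) 1) (huv : fractAdd u v = 0)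
    (huw : fractAdd u w = v) (hvw : fractAdd v w = u) {p q r : ℕ} (hp : ∑ i, u i = p)
    (hq : ∑ i, v i = q) (hr : ∑ i, w i = r) :
    p ≤ q + r ∧ q ≤ p + r ∧ 2 * r ≤ p + q ∧ p + q ≤ Fintype.card κ := by
  have hcoord : ∀ i, u i ≤ v i + w i ∧ v i ≤ u i + w i ∧ 2 * w i ≤ u i + v i ∧
      u i + v i ≤ 1 := fun i => by
    obtain ⟨hu0, hu1⟩ := hu i
    obtain ⟨hv0, hv1⟩ := hv i
    obtain ⟨hw0, hw1⟩ := hw i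
    have : fractAdd u v i = 0 := congrFun huv i
    have := congrFun huw i
    have := congrFun hvw i
    rcases fractAdd_apply_eq_or (hu i) (hv i) with h1 | h1 <;>
    rcases fractAdd_apply_eq_or (hu i) (hw i) with h2 | h2 <;>
    rcases fractAdd_apply_eq_or (hv i) (hw i) with h3 | h3 <;>
    refine ⟨?_, ?_, ?_, ?_⟩ <;> linarith
  have hsum := fun {f g : κ → ℝ} (h : ∀ i, f i ≤ g i) =>
    Finset.sum_le_sum fun i (_ : i ∈ Finset.univ) => h i
  rify
  rw [← hp, ← hq, ← hr]
  simpa only [Finset.sum_add_distrib, ← Finset.mul_sum, Finset.sum_const, Finset.card_univ,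
    nsmul_eq_mul, mul_one] using And.intro (hsum fun i => (hcoord i).1)
      (And.intro (hsum fun i => (hcoord i).2.1)
        (And.intro (hsum fun i => (hcoord i).2.2.1) (hsum fun i => (hcoord i).2.2.2)))

theorem isAdmissible_of_fractAdd_mem [Fintype κ] (hu : ∀ i, u i ∈ Ico (0 : ℝ) 1)
    (hv : ∀ i, v i ∈ Ico (0 : ℝ) 1) (hw : ∀ i, w i ∈ Ico (0 : ℝ) 1) (hu0 : u ≠ 0) (hv0 : v ≠ 0)
    (hw0 : w ≠ 0) (huv : u ≠ v) (huw : u ≠ w) (hvw : v ≠ w)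
    (hadd : ∀ x ∈ ({0, u, v, w} : Set (κ → ℝ)), ∀ y ∈ ({0, u, v, w} : Set (κ → ℝ)),
      fractAdd x y ∈ ({0, u, v, w} : Set (κ → ℝ)))
    {p q r : ℕ} (hp : ∑ i, u i = p) (hq : ∑ i, v i = q) (hr : ∑ i, w i = r)
    (hpq : p ≤ q) (hqr : q ≤ r) : IsAdmissible (Fintype.card κ) p q r := by
  have huv' : fractAdd u v = 0 ∨ fractAdd u v = w :=
    fractAdd_eq_zero_or_eq hu hv hu0 hv0 (hadd u (by simp) v (by simp))
  have huw' : fractAdd u w = 0 ∨ fractAdd u w = v :=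
    fractAdd_eq_zero_or_eq hu hw hu0 hw0 (pair_comm v w ▸ hadd u (by simp) w (by simp))
  have hvw' : fractAdd v w = 0 ∨ fractAdd v w = u :=
    fractAdd_eq_zero_or_eq hv hw hv0 hw0
      (pair_comm w u ▸ insert_comm u v {w} ▸ hadd v (by simp) w (by simp))
  have hcancel : ∀ {x y z : κ → ℝ}, (∀ i, y i ∈ Ico (0 : ℝ) 1) → (∀ i, z i ∈ Ico (0 : ℝ) 1) →
      y ≠ z → fractAdd x y = 0 → fractAdd x z ≠ 0 := fun hy hz hyz h h' =>
    hyz (fractAdd_left_cancel hy hz (h.trans h'.symm))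
  unfold IsAdmissible
  rcases huv' with a | a
  · have b := huw'.resolve_left (hcancel hv hw hvw a)
    have c := hvw'.resolve_left (hcancel hu hw huw (fractAdd_comm u v ▸ a))
    have := sum_le_of_cyclic hu hv hw a b c hp hq hr
    lia
  rcases huw' with b | b
  · have c := hvw'.resolve_left fun c =>
      hcancel hu hv huv (fractAdd_comm u w ▸ b) (fractAdd_comm v w ▸ c)
    have := sum_le_of_cyclic hu hw hv b a (fractAdd_comm v w ▸ c) hp hr hq
    lia
  rcases hvw' with c | c
  · have := sum_le_of_cyclic hv hw hu c (fractAdd_comm u v ▸ a) (fractAdd_comm u w ▸ b) hq hr hp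
    lia
  · have := sum_le_of_klein hu hv hw a b c hp hq hr
    lia

end FractAdd

lemma exists_val_eq_of_map_val_eq {α β : Type*} {s : Finset α} {f : α → β} {a b c e : β}
    (h : s.val.map f = {a, b, c, e}) :
    ∃ x y z t, s.val = {x, y, z, t} ∧ f x = a ∧ f y = b ∧ f z = c ∧ f t = e := by
  classical
  obtain ⟨x, hx, hfx, h⟩ := (Multiset.map_eq_cons _ _ _ _).2 h
  obtain ⟨y, hy, hfy, h⟩ := (Multiset.map_eq_cons _ _ _ _).2 h
  obtain ⟨z, hz, hfz, h⟩ := (Multiset.map_eq_cons _ _ _ _).2 h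
  obtain ⟨t, ht, hft⟩ := Multiset.map_eq_singleton.1 h
  refine ⟨x, y, z, t, ?_, hfx, hfy, hfz, hft⟩
  simp only [Multiset.insert_eq_cons, ← ht, Multiset.cons_erase, hx, hy, hz]

theorem isAdmissible_of_map_sum_eq {κ : Type*} [Fintype κ] {B : Finset (κ → ℝ)}
    (hB : ∀ x ∈ B, ∀ i, x i ∈ Ico (0 : ℝ) 1) (hadd : ∀ x ∈ B, ∀ y ∈ B, fractAdd x y ∈ B)
    {p q r : ℕ} (hpq : p ≤ q) (hqr : q ≤ r)
    (hsum : (B.val.map fun x => ∑ i, x i) = {0, (p : ℝ), (q : ℝ), (r : ℝ)}) :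
    IsAdmissible (Fintype.card κ) p q r := by
  obtain ⟨o, u, v, w, hval, ho, hu, hv, hw⟩ := exists_val_eq_of_map_val_eq hsum
  have hmem : ∀ x, x ∈ B ↔ x ∈ ({o, u, v, w} : Set (κ → ℝ)) := fun x => by
    simp [← Finset.mem_val, hval]
  have hnodup := B.nodup
  simp only [hval, Multiset.insert_eq_cons, Multiset.nodup_cons, Multiset.mem_cons,
    Multiset.mem_singleton, not_or, Multiset.nodup_singleton, and_true] at hnodup
  obtain ⟨⟨hou, hov, how⟩, ⟨huv, huw⟩, hvw⟩ := hnodup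
  obtain rfl : o = 0 := funext fun i =>
    (Finset.sum_eq_zero_iff_of_nonneg fun i _ => (hB o ((hmem o).2 (by simp)) i).1).1 ho i
      (Finset.mem_univ i)
  simp only [hmem] at hB hadd
  exact isAdmissible_of_fractAdd_mem (hB u (by simp)) (hB v (by simp)) (hB w (by simp))
    (Ne.symm hou) (Ne.symm hov) (Ne.symm how) huv huw hvw hadd hu hv hw hpq hqr

section Simplex

variable {E κ : Type*} [AddCommGroup E] [Module ℝ E] {Λ : AddSubgroup E} {l : E →ₗ[ℝ] ℝ}
  {b : Module.Basis κ ℝ E}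

lemma mem_halfOpenBox_univ {x : E} :
    x ∈ halfOpenBox Λ b univ ↔ x ∈ Λ ∧ ∀ i, b.repr x i ∈ Ico (0 : ℝ) 1 := by
  refine and_congr_right fun _ => forall_congr' fun i => ⟨fun h => ⟨h.1, ?_⟩, fun h =>
    ⟨h.1, h.2.le, fun _ => mem_univ i, fun h1 => absurd h1 h.2.ne⟩⟩
  exact h.2.1.lt_of_ne fun h1 => h.2.2.2 h1 (mem_univ i)

lemma exists_mem_halfOpenBox_univ_fract [Finite κ] (hb : ∀ i, b i ∈ Λ) {x : E} (hx : x ∈ Λ) :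
    ∃ z ∈ halfOpenBox Λ b univ, ∀ i, b.repr z i = Int.fract (b.repr x i) := by
  have := Fintype.ofFinite κ
  have hz : ∀ i, b.repr (x - ∑ j, ⌊b.repr x j⌋ • b j) i = Int.fract (b.repr x i) := fun i => by
    classical
    simp [Finsupp.single_apply, ← Int.cast_smul_eq_zsmul ℝ]
  refine ⟨x - ∑ j, ⌊b.repr x j⌋ • b j, mem_halfOpenBox_univ.2
    ⟨sub_mem hx (sum_mem fun i _ => zsmul_mem (hb i) _), fun i => ?_⟩, hz⟩
  rw [hz]
  exact ⟨Int.fract_nonneg _, Int.fract_lt_one _⟩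

lemma coneSlice_basis [Finite κ] (n : ℕ) :
    coneSlice Λ l b n = {x | x ∈ Λ ∧ l x = n ∧ x ∈ halfOpenCone b univ} := by
  have := Fintype.ofFinite κ
  ext x
  refine and_congr_right fun _ => and_congr_right fun _ => ?_
  rw [mem_hull_range_iff]
  refine ⟨?_, fun h => ⟨_, fun i => (h i).1, b.sum_repr x⟩⟩
  rintro ⟨c, hc, rfl⟩ i
  rw [b.repr_sum_self]
  exact ⟨hc i, fun _ => mem_univ i⟩

theorem isAdmissible_of_map_halfOpenBox_eq [Fintype κ] (hb : ∀ i, b i ∈ Λ) (hl : ∀ i, l (b i) = 1)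
    (hint : ∀ x ∈ Λ, ∃ m : ℤ, l x = m) (hfin : (halfOpenBox Λ b univ).Finite) {p q r : ℕ}
    (hpq : p ≤ q) (hqr : q ≤ r)
    (hH : (hfin.toFinset.val.map fun β => ⌊l β⌋₊) = {0, p, q, r}) :
    IsAdmissible (Fintype.card κ) p q r := by
  have hmem : ∀ {y}, y ∈ hfin.toFinset.map b.equivFun.toEquiv.toEmbedding ↔
      ∃ x ∈ halfOpenBox Λ b univ, b.equivFun x = y := by
    simp only [Finset.mem_map, Finite.mem_toFinset, Equiv.coe_toEmbedding, LinearEquiv.coe_toEquiv,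
      implies_true]
  refine isAdmissible_of_map_sum_eq (B := hfin.toFinset.map b.equivFun.toEquiv.toEmbedding)
    (fun y hy => ?_) (fun y hy y' hy' => ?_) hpq hqr ?_
  · obtain ⟨x, hx, rfl⟩ := hmem.1 hy
    exact (mem_halfOpenBox_univ.1 hx).2
  · obtain ⟨x, hx, rfl⟩ := hmem.1 hy
    obtain ⟨x', hx', rfl⟩ := hmem.1 hy'
    obtain ⟨z, hz, hzx⟩ := exists_mem_halfOpenBox_univ_fract hb (add_mem hx.1 hx'.1)
    exact hmem.2 ⟨z, hz, funext fun i => by simp [fractAdd, hzx]⟩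
  · have hheight : ∀ x ∈ hfin.toFinset.val, ∑ i, b.repr x i = (⌊l x⌋₊ : ℝ) := fun x hx => by
      have hx : x ∈ halfOpenBox Λ b univ := hfin.mem_toFinset.1 hx
      rw [floor_eq_of_nonneg_of_isInt (hint x hx.1) (linearMap_nonneg_of_mem_halfOpenCone hl
        (halfOpenBox_subset_halfOpenCone b univ hx)), linearMap_eq_sum_repr hl]
    have hcast := congrArg (Multiset.map (Nat.cast : ℕ → ℝ)) hH
    rw [Multiset.map_map] at hcast
    rw [Finset.map_val, Multiset.map_map]
    refine (Multiset.map_congr rfl fun x hx => ?_).trans (hcast.trans (by simp))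
    exact hheight x hx

end Simplex

/-! ### Vector configurations with a unique circuit -/

section NatSlice

variable {ι E : Type*} [Fintype ι] [AddCommGroup E] {v : ι → E} {n : ℕ}

/-- The sums of `n` vectors from the family `v`, repetitions allowed. -/
def natSlice (v : ι → E) (n : ℕ) : Set E :=
  (fun f : ι → ℕ => ∑ i, f i • v i) '' {f | ∑ i, f i = n}

lemma natSlice_subset_coneSlice [Module ℝ E] {Λ : AddSubgroup E} {l : E →ₗ[ℝ] ℝ}
    (hv : ∀ i, v i ∈ Λ) (hl : ∀ i, l (v i) = 1) (n : ℕ) : natSlice v n ⊆ coneSlice Λ l v n := by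
  rintro _ ⟨f, rfl, rfl⟩
  refine ⟨sum_mem fun i _ => nsmul_mem (hv i) _, by simp [hl], mem_hull_range_iff.2
    ⟨fun i => f i, fun i => (f i).cast_nonneg, by simp only [Nat.cast_smul_eq_nsmul]⟩⟩

lemma add_mem_natSlice {x : E} (hx : x ∈ natSlice v n) (i : ι) :
    x + v i ∈ natSlice v (n + 1) := by
  classical
  obtain ⟨f, rfl, rfl⟩ := hx
  exact ⟨f + Pi.single i 1, by simp [Finset.sum_add_distrib],
    by simp [Finset.sum_add_distrib, add_smul, Pi.single_apply]⟩

variable [DecidableEq ι]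

lemma filter_piAntidiag_univ_apply_eq_zero (p : ι) (n : ℕ) :
    {f ∈ (Finset.univ : Finset ι).piAntidiag n | f p = 0} =
      (Finset.univ.erase p).piAntidiag n := by
  ext f
  simp only [Finset.mem_filter, Finset.mem_piAntidiag, Finset.mem_erase, Finset.mem_univ,
    implies_true, and_true]
  constructor
  · rintro ⟨hf, hfp⟩
    exact ⟨by rw [Finset.sum_erase _ hfp, hf], fun i hi h => hi (h ▸ hfp)⟩
  · rintro ⟨hf, hfp⟩
    have hfp : f p = 0 := by_contra fun h => hfp p h rfl
    exact ⟨by rw [← hf, Finset.sum_erase _ hfp], hfp⟩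

lemma filter_piAntidiag_univ_succ {p q : ι} (hpq : p ≠ q) (n : ℕ) :
    {f ∈ (Finset.univ : Finset ι).piAntidiag (n + 1) | f q = 0 ∧ ¬f p = 0} =
      {f ∈ (Finset.univ : Finset ι).piAntidiag n | f q = 0}.map
        (addRightEmbedding (Pi.single p 1)) := by
  ext f
  simp only [Finset.mem_filter, Finset.mem_map, Finset.mem_piAntidiag, Finset.mem_univ,
    implies_true, and_true, addRightEmbedding_apply]
  constructor
  · rintro ⟨hf, hfq, hfp⟩
    have hsub : f - Pi.single p 1 + Pi.single p 1 = f :=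
      tsub_add_cancel_of_le fun i => by
        rcases eq_or_ne i p with rfl | hi
        · simpa using Nat.one_le_iff_ne_zero.2 hfp
        · simp [hi]
    refine ⟨f - Pi.single p 1, ⟨?_, by simp [hfq]⟩, hsub⟩
    rw [← hsub] at hf
    simpa [Finset.sum_add_distrib] using hf
  · rintro ⟨g, ⟨rfl, hgq⟩, rfl⟩
    simp [Finset.sum_add_distrib, hgq, hpq.symm]

lemma card_filter_piAntidiag_eq_zero_or {k : ℕ} (hk : Fintype.card ι = k + 1) {p q : ι}
    (hpq : p ≠ q) (n : ℕ) :
    {f ∈ (Finset.univ : Finset ι).piAntidiag n | f p = 0 ∨ f q = 0}.card =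
      shiftedMultichoose k 0 n + shiftedMultichoose k 1 n := by
  have hcard (i : ι) (m : ℕ) :
      {f ∈ (Finset.univ : Finset ι).piAntidiag m | f i = 0}.card = k.multichoose m := by
    rw [filter_piAntidiag_univ_apply_eq_zero, card_piAntidiag,
      Finset.card_erase_of_mem (Finset.mem_univ i), Finset.card_univ, hk, Nat.add_sub_cancel]
  have hsplit : {f ∈ (Finset.univ : Finset ι).piAntidiag n | f p = 0 ∨ f q = 0} =
      {f ∈ (Finset.univ : Finset ι).piAntidiag n | f p = 0}.disjUnion
        {f ∈ (Finset.univ : Finset ι).piAntidiag n | f q = 0 ∧ ¬f p = 0}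
        (Finset.disjoint_filter.2 fun f _ hf => fun h => h.2 hf) := by
    ext f
    simp only [Finset.mem_filter, Finset.disjUnion_eq_union, Finset.mem_union]
    tauto
  rw [hsplit, Finset.card_disjUnion, hcard]
  congr 1
  rcases n with _ | n
  · rw [shiftedMultichoose_of_lt _ one_pos, Finset.card_eq_zero, Finset.filter_eq_empty_iff]
    simp_all
  · rw [filter_piAntidiag_univ_succ hpq, Finset.card_map, hcard]
    rfl

end NatSlice

section Circuit

variable {ι E : Type*} [AddCommGroup E] [Module ℝ E] {v : ι → E} {p q r s : ι}

lemma eq_of_add_self_eq_add (hv : ConvexIndependent ℝ v) (h : v p + v p = v r + v s) : p = r := by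
  have hmid : midpoint ℝ (v r) (v s) = v p := by
    rw [midpoint_eq_smul_add, ← h, ← two_smul ℝ (v p), invOf_smul_smul]
  have hmem : v p ∈ convexHull ℝ (v '' {r, s}) := by
    rw [image_pair, convexHull_pair, ← hmid]
    exact midpoint_mem_segment _ _
  rcases hv _ _ hmem with rfl | rfl
  · rfl
  · exact hv.injective (add_right_cancel h)

lemma ne_of_add_eq_add (hv : ConvexIndependent ℝ v) (hadd : v p + v q = v r + v s)
    (hne : s(p, q) ≠ s(r, s)) : p ≠ r := by
  rintro rfl
  exact hne (by rw [hv.injective (add_left_cancel hadd)])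

lemma exists_eq_mul_of_sum_smul_eq_zero [Fintype ι]
    (hcard : Fintype.card ι = Module.finrank ℝ E + 1) (hspan : Submodule.span ℝ (range v) = ⊤)
    {w : ι → ℝ} (hw : w ≠ 0) (hwv : ∑ i, w i • v i = 0) {c : ι → ℝ}
    (hcv : ∑ i, c i • v i = 0) : ∃ a : ℝ, ∀ i, c i = a * w i := by
  let L := Fintype.linearCombination ℝ v
  have hrank := LinearMap.finrank_range_add_finrank_ker L
  rw [Fintype.range_linearCombination, hspan, finrank_top, Module.finrank_fintype_fun_eq_card,
    hcard, Nat.add_left_cancel_iff] at hrank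
  have hmem {c : ι → ℝ} (hc : ∑ i, c i • v i = 0) : c ∈ LinearMap.ker L := by
    rwa [LinearMap.mem_ker, Fintype.linearCombination_apply]
  obtain ⟨a, ha⟩ := (finrank_eq_one_iff_of_nonzero' (⟨w, hmem hwv⟩ : LinearMap.ker L)
    fun h => hw (congrArg Subtype.val h)).1 hrank ⟨c, hmem hcv⟩
  exact ⟨a, fun i => (congrFun (congrArg Subtype.val ha) i).symm⟩

variable [DecidableEq ι]

/-- The coefficients of the relation `v p + v q = v r + v s`. -/
def circuitVec (p q r s : ι) : ι → ℤ :=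
  Pi.single p 1 + Pi.single q 1 - Pi.single r 1 - Pi.single s 1

lemma circuitVec_comm (p q r s : ι) : circuitVec p q r s = circuitVec q p r s := by
  rw [circuitVec, circuitVec, add_comm (Pi.single p 1)]

lemma circuitVec_apply_left (hpq : p ≠ q) (hpr : p ≠ r) (hps : p ≠ s) :
    circuitVec p q r s p = 1 := by
  simp [circuitVec, hpq, hpr, hps]

lemma circuitVec_nonpos {i : ι} (hp : i ≠ p) (hq : i ≠ q) : circuitVec p q r s i ≤ 0 := by
  simp only [circuitVec, Pi.add_apply, Pi.sub_apply, Pi.single_apply, if_neg hp, if_neg hq]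
  split_ifs <;> lia

lemma neg_one_le_circuitVec (hrs : r ≠ s) (i : ι) : -1 ≤ circuitVec p q r s i := by
  simp only [circuitVec, Pi.add_apply, Pi.sub_apply, Pi.single_apply]
  split_ifs <;> simp_all

variable [Fintype ι]

lemma sum_circuitVec_smul (v : ι → E) (p q r s : ι) :
    ∑ i, (circuitVec p q r s i : ℝ) • v i = v p + v q - v r - v s := by
  simp [circuitVec, sub_smul, add_smul, Finset.sum_add_distrib, Pi.single_apply]

/-- The linear relations between the vectors `v i` are the multiples of
`v p + v q = v r + v s`, where `p`, `q`, `r`, `s` are distinct. -/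
structure IsCircuit (v : ι → E) (p q r s : ι) : Prop where
  left_ne : p ≠ q
  right_ne : r ≠ s
  ne_right : p ≠ r ∧ p ≠ s ∧ q ≠ r ∧ q ≠ s
  add_eq_add : v p + v q = v r + v s
  exists_eq_mul : ∀ c : ι → ℝ, ∑ i, c i • v i = 0 →
    ∃ a : ℝ, ∀ i, c i = a * circuitVec p q r s i

lemma isCircuit_of_add_eq_add (hcard : Fintype.card ι = Module.finrank ℝ E + 1)
    (hspan : Submodule.span ℝ (range v) = ⊤) (hv : ConvexIndependent ℝ v)
    (hadd : v p + v q = v r + v s) (hne : s(p, q) ≠ s(r, s)) : IsCircuit v p q r s := by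
  have hpr := ne_of_add_eq_add hv hadd hne
  have hps := ne_of_add_eq_add hv (hadd.trans (add_comm _ _)) (by rwa [Sym2.eq_swap (a := s)])
  have hqr := ne_of_add_eq_add hv ((add_comm _ _).trans hadd) (by rwa [Sym2.eq_swap (a := q)])
  have hqs := ne_of_add_eq_add hv (((add_comm _ _).trans hadd).trans (add_comm _ _))
    (by rwa [Sym2.eq_swap (a := q), Sym2.eq_swap (a := s)])
  have hpq : p ≠ q := by
    rintro rfl
    exact hpr (eq_of_add_self_eq_add hv hadd)
  have hrs : r ≠ s := by
    rintro rfl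
    exact hpr (eq_of_add_self_eq_add hv hadd.symm).symm
  refine ⟨hpq, hrs, ⟨hpr, hps, hqr, hqs⟩, hadd, fun c hc => ?_⟩
  refine exists_eq_mul_of_sum_smul_eq_zero hcard hspan (fun hzero => ?_) ?_ hc
  · simpa [circuitVec_apply_left hpq hpr hps] using congrFun hzero p
  · rw [sum_circuitVec_smul, hadd, add_sub_cancel_left, sub_self]

namespace IsCircuit

lemma symm (h : IsCircuit v p q r s) : IsCircuit v q p r s where
  left_ne := h.left_ne.symm
  right_ne := h.right_ne
  ne_right := ⟨h.ne_right.2.2.1, h.ne_right.2.2.2, h.ne_right.1, h.ne_right.2.1⟩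
  add_eq_add := (add_comm _ _).trans h.add_eq_add
  exists_eq_mul := circuitVec_comm p q r s ▸ h.exists_eq_mul

lemma circuitVec_left (h : IsCircuit v p q r s) : circuitVec p q r s p = 1 :=
  circuitVec_apply_left h.left_ne h.ne_right.1 h.ne_right.2.1

lemma circuitVec_right (h : IsCircuit v p q r s) : circuitVec p q r s q = 1 :=
  circuitVec_comm p q r s ▸ h.symm.circuitVec_left

lemma sum_add_mul_smul (h : IsCircuit v p q r s) (c : ι → ℝ) (a : ℝ) :
    ∑ i, (c i + a * circuitVec p q r s i) • v i = ∑ i, c i • v i := by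
  simp only [add_smul, mul_smul, Finset.sum_add_distrib, ← Finset.smul_sum, sum_circuitVec_smul,
    h.add_eq_add, add_sub_cancel_left, sub_self, smul_zero, add_zero]

lemma eq_add_mul_of_sum_smul_eq (h : IsCircuit v p q r s) {c c' : ι → ℝ}
    (hcc' : ∑ i, c i • v i = ∑ i, c' i • v i) (i : ι) :
    c i = c' i + (c p - c' p) * circuitVec p q r s i := by
  obtain ⟨a, ha⟩ := h.exists_eq_mul (c - c') (by simp [sub_smul, hcc'])
  have hp : c p - c' p = a := by simpa [h.circuitVec_left] using ha p
  rw [hp, ← ha, Pi.sub_apply, add_sub_cancel]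

lemma add_mul_circuitVec_nonneg (h : IsCircuit v p q r s) {c : ι → ℝ} (hc : ∀ i, 0 ≤ c i) (i : ι) :
    0 ≤ c i + -min (c p) (c q) * circuitVec p q r s i := by
  by_cases hp : i = p
  · simp [hp, h.circuitVec_left]
  by_cases hq : i = q
  · simp [hq, h.circuitVec_right]
  have hnonpos : (circuitVec p q r s i : ℝ) ≤ 0 := mod_cast circuitVec_nonpos hp hq
  nlinarith [hc i, le_min (hc p) (hc q)]

lemma exists_coeff_eq_zero (h : IsCircuit v p q r s) {x : E}
    (hx : x ∈ PointedCone.hull ℝ (range v)) :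
    ∃ c : ι → ℝ, (∀ i, 0 ≤ c i) ∧ ∑ i, c i • v i = x ∧ (c p = 0 ∨ c q = 0) := by
  obtain ⟨c, hc, rfl⟩ := mem_hull_range_iff.1 hx
  refine ⟨_, h.add_mul_circuitVec_nonneg hc, h.sum_add_mul_smul c _, ?_⟩
  simp only [h.circuitVec_left, h.circuitVec_right]
  rcases le_total (c p) (c q) with hle | hle
  · exact Or.inl (by simp [hle])
  · exact Or.inr (by simp [hle])

lemma natSlice_eq_image (h : IsCircuit v p q r s) (n : ℕ) :
    natSlice v n = (fun f : ι → ℕ => ∑ i, f i • v i) ''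
      {f | ∑ i, f i = n ∧ (f p = 0 ∨ f q = 0)} := by
  refine subset_antisymm ?_ (image_mono fun f hf => hf.1)
  rintro _ ⟨f, rfl, rfl⟩
  have hnonneg := h.add_mul_circuitVec_nonneg (c := fun i => f i) fun i => (f i).cast_nonneg
  rw [← Nat.cast_min] at hnonneg
  have hg (i : ι) : ∃ g : ℕ, (g : ℤ) = f i + -(min (f p) (f q) : ℕ) * circuitVec p q r s i :=
    ⟨_, Int.toNat_of_nonneg (mod_cast hnonneg i)⟩
  choose g hg using hg
  have hsum : ∑ i, circuitVec p q r s i = 0 := by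
    simp [circuitVec, Finset.sum_add_distrib]
  refine ⟨g, ⟨?_, ?_⟩, ?_⟩
  · zify
    simp only [hg, Finset.sum_add_distrib, ← Finset.mul_sum, hsum, mul_zero, add_zero]
  · have hp := hg p
    have hq := hg q
    rw [h.circuitVec_left] at hp
    rw [h.circuitVec_right] at hq
    lia
  · have hg (i : ι) : (g i : ℝ) = f i + -(min (f p) (f q) : ℕ) * circuitVec p q r s i :=
      mod_cast hg i
    simp only [← Nat.cast_smul_eq_nsmul ℝ, hg, h.sum_add_mul_smul]

lemma injOn_sum_smul (h : IsCircuit v p q r s) :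
    InjOn (fun f : ι → ℕ => ∑ i, f i • v i) {f | f p = 0 ∨ f q = 0} := by
  intro f hf g hg hfg
  simp only [← Nat.cast_smul_eq_nsmul ℝ] at hfg
  have hdiff := h.eq_add_mul_of_sum_smul_eq hfg
  have hq := hdiff q
  rw [h.circuitVec_right, Int.cast_one, mul_one] at hq
  have hp : f p = g p := by
    have hq : (f q : ℤ) = g q + (f p - g p) := mod_cast hq
    rcases hf with hf | hf <;> rcases hg with hg | hg <;> lia
  funext i
  simpa [hp] using hdiff i

theorem ncard_natSlice (h : IsCircuit v p q r s) {k : ℕ} (hk : Fintype.card ι = k + 1) (n : ℕ) :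
    (natSlice v n).ncard = shiftedMultichoose k 0 n + shiftedMultichoose k 1 n := by
  have hcoe : {f : ι → ℕ | ∑ i, f i = n ∧ (f p = 0 ∨ f q = 0)} =
      ({f ∈ (Finset.univ : Finset ι).piAntidiag n | f p = 0 ∨ f q = 0} : Finset (ι → ℕ)) := by
    ext f
    simp
  rw [h.natSlice_eq_image, (h.injOn_sum_smul.mono fun f hf => hf.2).ncard_image, hcoe,
    ncard_coe_finset, card_filter_piAntidiag_eq_zero_or hk h.left_ne]

end IsCircuit

end Circuit

/-! ### Reflecting the first lattice point that is not a sum of vertices -/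

section Reflection

variable {ι E : Type*} [Fintype ι] [AddCommGroup E] [Module ℝ E]
  {Λ : AddSubgroup E} {l : E →ₗ[ℝ] ℝ} {v : ι → E} {p q r s : ι} {k : ℕ} {c : ι → ℝ}

lemma coeff_lt_one_of_notMem_natSlice (hv : ∀ i, v i ∈ Λ) (hl : ∀ i, l (v i) = 1)
    (hlow : coneSlice Λ l v k ⊆ natSlice v k) {x : E} (hx : x ∈ coneSlice Λ l v (k + 1))
    (hxn : x ∉ natSlice v (k + 1)) (hc : ∀ i, 0 ≤ c i) (hcx : ∑ i, c i • v i = x) (i : ι) :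
    c i < 1 := by
  classical
  by_contra! hge
  have hmem : x - v i ∈ coneSlice Λ l v k := by
    refine ⟨sub_mem hx.1 (hv i), by simp [hx.2.1, hl], mem_hull_range_iff.2
      ⟨c - Pi.single i 1, fun j => ?_, by simp [sub_smul, hcx, Pi.single_apply]⟩⟩
    rcases eq_or_ne j i with rfl | hj
    · simpa using hge
    · simpa [hj] using hc j
  exact hxn (by simpa using add_mem_natSlice (hlow hmem) i)

variable [DecidableEq ι]

/-- The coefficients of `∑ i ≠ p, v i - x` when `x = ∑ i, c i • v i` with `c p = 0`. -/
def reflectedCoeff (p : ι) (c : ι → ℝ) (i : ι) : ℝ := if i = p then 0 else 1 - c i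

lemma sum_reflectedCoeff_smul (v : ι → E) (hcp : c p = 0) :
    ∑ i, reflectedCoeff p c i • v i = ∑ i ∈ Finset.univ.erase p, v i - ∑ i, c i • v i := by
  have hc : ∑ i ∈ Finset.univ.erase p, c i • v i = ∑ i, c i • v i :=
    Finset.sum_erase _ (by rw [hcp, zero_smul])
  have hrefl : ∑ i ∈ Finset.univ.erase p, reflectedCoeff p c i • v i =
      ∑ i, reflectedCoeff p c i • v i :=
    Finset.sum_erase _ (by rw [reflectedCoeff, if_pos rfl, zero_smul])
  rw [← hc, ← hrefl, ← Finset.sum_sub_distrib]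
  refine Finset.sum_congr rfl fun i hi => ?_
  rw [reflectedCoeff, if_neg (Finset.ne_of_mem_erase hi), sub_smul, one_smul]

lemma exists_sum_reflectedCoeff_smul_mem_coneSlice (hv : ∀ i, v i ∈ Λ) (hl : ∀ i, l (v i) = 1)
    (hx : ∑ i, c i • v i ∈ coneSlice Λ l v k) (hc1 : ∀ i, c i ≤ 1) (hcp : c p = 0) :
    ∃ n, k + n + 1 = Fintype.card ι ∧ ∑ i, reflectedCoeff p c i • v i ∈ coneSlice Λ l v n := by
  have hmem : ∑ i, reflectedCoeff p c i • v i ∈ PointedCone.hull ℝ (range v) := by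
    refine mem_hull_range_iff.2 ⟨_, fun i => ?_, rfl⟩
    rw [reflectedCoeff]
    split_ifs
    · exact le_rfl
    · exact sub_nonneg.2 (hc1 i)
  have hcard := Finset.card_erase_add_one (Finset.mem_univ p)
  rw [Finset.card_univ] at hcard
  have hheight : l (∑ i, reflectedCoeff p c i • v i) = (Finset.univ.erase p).card - k := by
    rw [sum_reflectedCoeff_smul v hcp, map_sub, hx.2.1, map_sum]
    simp only [hl, Finset.sum_const, nsmul_one]
  have hle : k ≤ (Finset.univ.erase p).card := by
    have hnonneg := linearMap_nonneg_of_mem_hull hl hmem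
    rwa [hheight, sub_nonneg, Nat.cast_le] at hnonneg
  refine ⟨(Finset.univ.erase p).card - k, by lia, ?_, by rw [hheight, Nat.cast_sub hle], hmem⟩
  rw [sum_reflectedCoeff_smul v hcp]
  exact sub_mem (sum_mem fun i _ => hv i) hx.1

namespace IsCircuit

lemma sum_reflectedCoeff_smul_notMem_natSlice (h : IsCircuit v p q r s)
    (hc : ∀ i, c i ∈ Ico (0 : ℝ) 1) (hcp : c p = 0) (hne : ∑ i, c i • v i ≠ 0) (n : ℕ) :
    ∑ i, reflectedCoeff p c i • v i ∉ natSlice v n := by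
  rintro ⟨f, -, hf⟩
  simp only [← Nat.cast_smul_eq_nsmul ℝ] at hf
  refine hne (Finset.sum_eq_zero fun i _ => ?_)
  rcases eq_or_ne i p with rfl | hi
  · rw [hcp, zero_smul]
  have hint := h.eq_add_mul_of_sum_smul_eq hf.symm i
  rw [reflectedCoeff, reflectedCoeff, if_neg hi, if_pos rfl] at hint
  obtain ⟨m, hm⟩ : ∃ m : ℤ, c i = m :=
    ⟨1 - f i + f p * circuitVec p q r s i, by push_cast; linarith⟩
  obtain ⟨h0, h1⟩ := hc i
  rw [hm] at h0 h1
  norm_cast at h0 h1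
  rw [hm, show m = 0 by lia, Int.cast_zero, zero_smul]

lemma sum_reflectedCoeff_smul_ne (h : IsCircuit v p q r s) (hcp : c p = 0)
    (hlt : ∀ c' : ι → ℝ, (∀ i, 0 ≤ c' i) → ∑ i, c' i • v i = ∑ i, c i • v i → ∀ i, c' i < 1) :
    ∑ i, reflectedCoeff p c i • v i ≠ ∑ i, c i • v i := by
  intro heq
  have hhalf : ∀ i ≠ p, c i = 1 / 2 := fun i hi => by
    have hci := h.eq_add_mul_of_sum_smul_eq heq i
    rw [reflectedCoeff, reflectedCoeff, if_neg hi, if_pos rfl, hcp] at hci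
    linarith
  have hq := hlt _ (fun i => ?_) (h.sum_add_mul_smul c (1 / 2)) q
  · rw [hhalf q h.left_ne.symm, h.circuitVec_right] at hq
    norm_num at hq
  · rcases eq_or_ne i p with rfl | hi
    · simp [hcp, h.circuitVec_left]
    · have hge : (-1 : ℝ) ≤ circuitVec p q r s i := mod_cast neg_one_le_circuitVec h.right_ne i
      rw [hhalf i hi]
      linarith

lemma exists_reflection_of_coeff_eq_zero (h : IsCircuit v p q r s) (hv : ∀ i, v i ∈ Λ)
    (hl : ∀ i, l (v i) = 1) (hlow : coneSlice Λ l v k ⊆ natSlice v k)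
    (hx : ∑ i, c i • v i ∈ coneSlice Λ l v (k + 1))
    (hxn : ∑ i, c i • v i ∉ natSlice v (k + 1)) (hc : ∀ i, 0 ≤ c i) (hcp : c p = 0) :
    ∃ n, k + 1 + n + 1 = Fintype.card ι ∧
      ∃ y ∈ coneSlice Λ l v n \ natSlice v n, y ≠ ∑ i, c i • v i := by
  have hlt (c' : ι → ℝ) (hc' : ∀ i, 0 ≤ c' i) (hcc' : ∑ i, c' i • v i = ∑ i, c i • v i) :=
    coeff_lt_one_of_notMem_natSlice hv hl hlow hx hxn hc' hcc'
  have hc1 := hlt c hc rfl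
  have hne : ∑ i, c i • v i ≠ 0 := fun h0 => by
    have hheight := hx.2.1
    rw [h0, map_zero] at hheight
    exact k.succ_ne_zero (mod_cast hheight.symm)
  obtain ⟨n, hn, hy⟩ :=
    exists_sum_reflectedCoeff_smul_mem_coneSlice hv hl hx (fun i => (hc1 i).le) hcp
  exact ⟨n, hn, _, ⟨hy, h.sum_reflectedCoeff_smul_notMem_natSlice (fun i => ⟨hc i, hc1 i⟩) hcp
    hne n⟩, h.sum_reflectedCoeff_smul_ne hcp hlt⟩

theorem exists_reflection (h : IsCircuit v p q r s) (hv : ∀ i, v i ∈ Λ) (hl : ∀ i, l (v i) = 1)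
    (hlow : coneSlice Λ l v k ⊆ natSlice v k) {x : E}
    (hx : x ∈ coneSlice Λ l v (k + 1) \ natSlice v (k + 1)) :
    ∃ n, k + 1 + n + 1 = Fintype.card ι ∧ ∃ y ∈ coneSlice Λ l v n \ natSlice v n, y ≠ x := by
  obtain ⟨c, hc, rfl, hcp | hcq⟩ := h.exists_coeff_eq_zero hx.1.2.2
  · exact h.exists_reflection_of_coeff_eq_zero hv hl hlow hx.1 hx.2 hc hcp
  · exact h.symm.exists_reflection_of_coeff_eq_zero hv hl hlow hx.1 hx.2 hc hcq

end IsCircuit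

end Reflection

/-! ### The inequalities for polytopes with more than `d + 1` vertices -/

section NonSimplex

variable {ι E : Type*} [AddCommGroup E] [Module ℝ E] {Λ : AddSubgroup E} {l : E →ₗ[ℝ] ℝ}
  {v : ι → E} {c : ι → ℝ} {z : E} {D p q r n : ℕ}

lemma range_subset_coneSlice_one (hv : ∀ i, v i ∈ Λ) (hl : ∀ i, l (v i) = 1) :
    range v ⊆ coneSlice Λ l v 1 := by
  rintro _ ⟨i, rfl⟩
  exact ⟨hv i, by simp [hl], Submodule.subset_span (mem_range_self i)⟩

lemma interiorSlice_subset_coneSlice (hz : z ∈ PointedCone.hull ℝ (range v)) (n : ℕ) :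
    interiorSlice Λ l v z n ⊆ coneSlice Λ l v n := by
  rintro x ⟨hx, hxl, ρ, hρ, hxρ⟩
  exact ⟨hx, hxl, by simpa using add_mem hxρ (PointedCone.smul_mem _ hρ.le hz)⟩

variable [Fintype ι]

lemma sum_smul_ne_of_forall_pos [Nontrivial ι] (hv : ConvexIndependent ℝ v) (hc : ∀ i, 0 < c i)
    (hsum : ∑ i, c i = 1) (i : ι) : ∑ j, c j • v j ≠ v i := by
  classical
  intro h
  obtain ⟨j, hj⟩ := exists_ne i
  have hpos : 0 < ∑ j ∈ Finset.univ.erase i, c j :=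
    Finset.sum_pos (fun j _ => hc j) ⟨j, Finset.mem_erase.2 ⟨hj, Finset.mem_univ j⟩⟩
  have hmass : (Finset.univ.erase i).centerMass c v = v i := by
    rw [← Finset.add_sum_erase _ _ (Finset.mem_univ i)] at h hsum
    rw [Finset.centerMass, inv_smul_eq_iff₀ hpos.ne', eq_sub_of_add_eq' hsum,
      eq_sub_of_add_eq' h, sub_smul, one_smul]
  have hmem : v i ∈ convexHull ℝ (v '' {i}ᶜ) := by
    rw [← hmass]
    exact Finset.centerMass_mem_convexHull _ (fun j _ => (hc j).le) hpos fun j hj =>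
      mem_image_of_mem v (Finset.ne_of_mem_erase hj)
  exact hv _ i hmem rfl

lemma ncard_range_eq_card (hv : ConvexIndependent ℝ v) : (range v).ncard = Fintype.card ι := by
  rw [← image_univ, ncard_image_of_injective _ hv.injective, ncard_univ, Nat.card_eq_fintype_card]

lemma card_le_ncard_interiorSlice_succ (hci : ConvexIndependent ℝ v) (hv : ∀ i, v i ∈ Λ)
    (hl : ∀ i, l (v i) = 1) (hfin : (interiorSlice Λ l v z (n + 1)).Finite)
    (hn : (interiorSlice Λ l v z n).Nonempty) :
    Fintype.card ι ≤ (interiorSlice Λ l v z (n + 1)).ncard := by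
  obtain ⟨u, hu, hul, ρ, hρ, huρ⟩ := hn
  rw [← ncard_range_eq_card hci, ← ncard_image_of_injective _ (add_right_injective u)]
  refine ncard_le_ncard ?_ hfin
  rintro _ ⟨_, ⟨i, rfl⟩, rfl⟩
  refine ⟨add_mem hu (hv i), by simp [hul, hl], ρ, hρ, ?_⟩
  rw [add_sub_right_comm]
  exact add_mem huρ (Submodule.subset_span (mem_range_self i))

lemma interiorSlice_one_eq_empty [Nontrivial ι] (hci : ConvexIndependent ℝ v)
    (hl : ∀ i, l (v i) = 1) (hc : ∀ i, 0 < c i)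
    (hsub : interiorSlice Λ l v (∑ i, c i • v i) 1 ⊆ range v) :
    interiorSlice Λ l v (∑ i, c i • v i) 1 = ∅ := by
  rw [eq_empty_iff_forall_notMem]
  intro x hx
  obtain ⟨i, rfl⟩ := hsub hx
  obtain ⟨-, -, ρ, hρ, hmem⟩ := hx
  obtain ⟨a, ha, hsum⟩ := mem_hull_range_iff.1 hmem
  have hrepr : ∑ j, (a j + ρ * c j) • v j = v i := by
    simp only [add_smul, mul_smul, Finset.sum_add_distrib, ← Finset.smul_sum, hsum, sub_add_cancel]
  refine sum_smul_ne_of_forall_pos hci (fun j => ?_) ?_ i hrepr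
  · exact add_pos_of_nonneg_of_pos (ha j) (mul_pos hρ (hc j))
  · simpa [hl] using congrArg l hrepr

lemma exists_isCircuit [DecidableEq ι] (hcard : Fintype.card ι = Module.finrank ℝ E + 1)
    (hspan : Submodule.span ℝ (range v) = ⊤) (hci : ConvexIndependent ℝ v) (hv : ∀ i, v i ∈ Λ)
    (hl : ∀ i, l (v i) = 1) (hfin : (coneSlice Λ l v 2).Finite)
    (hlt : (coneSlice Λ l v 2).ncard < (Fintype.card ι).multichoose 2) :
    ∃ i j i' j', IsCircuit v i j i' j' := by
  let f : Sym2 ι → E := Sym2.lift ⟨fun i j => v i + v j, fun _ _ => add_comm _ _⟩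
  have hmaps : ∀ a ∈ (univ : Set (Sym2 ι)), f a ∈ coneSlice Λ l v 2 := by
    rintro ⟨i, j⟩ -
    refine ⟨add_mem (hv i) (hv j), ?_, add_mem (Submodule.subset_span (mem_range_self i))
      (Submodule.subset_span (mem_range_self j))⟩
    change l (v i + v j) = _
    rw [map_add, hl, hl]
    norm_num
  rw [Nat.multichoose_eq, Nat.add_succ_sub_one, ← Sym2.card, ← Nat.card_eq_fintype_card,
    ← ncard_univ] at hlt
  obtain ⟨⟨i, j⟩, -, ⟨i', j'⟩, -, hne, heq⟩ :=
    exists_ne_map_eq_of_ncard_lt_of_maps_to hlt hmaps hfin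
  exact ⟨i, j, i', j', isCircuit_of_add_eq_add hcard hspan hci heq hne⟩

lemma eq_one_of_lt_card (hci : ConvexIndependent ℝ v) (hv : ∀ i, v i ∈ Λ) (hl : ∀ i, l (v i) = 1)
    (hfin : (coneSlice Λ l v 1).Finite) (hD : D < Fintype.card ι) (hp : 1 ≤ p) (hpq : p ≤ q)
    (hqr : q ≤ r)
    (hM : (coneSlice Λ l v 1).ncard = shiftedMultichoose D 0 1 + shiftedMultichoose D p 1 +
      shiftedMultichoose D q 1 + shiftedMultichoose D r 1) : p = 1 := by
  have hle := ncard_le_ncard (range_subset_coneSlice_one hv hl) hfin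
  rw [ncard_range_eq_card hci, hM, shiftedMultichoose_succ] at hle
  by_contra hne
  rw [shiftedMultichoose_of_lt D (by lia : 1 < p), shiftedMultichoose_of_lt D (by lia : 1 < q),
    shiftedMultichoose_of_lt D (by lia : 1 < r)] at hle
  lia

-- The interior slice at height `D - r` holds a single point, whose translates by the vertices are
-- too many for the next slice when `q + 1 < r`.
lemma le_add_one_of_lt_card (hci : ConvexIndependent ℝ v) (hv : ∀ i, v i ∈ Λ)
    (hl : ∀ i, l (v i) = 1) (hfin : ∀ n, (interiorSlice Λ l v z n).Finite)
    (hD : D < Fintype.card ι) (hpq : p ≤ q) (hrD : r < D)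
    (hI : ∀ n, (interiorSlice Λ l v z n).ncard = shiftedMultichoose D D n +
      shiftedMultichoose D (D - p) n + shiftedMultichoose D (D - q) n +
      shiftedMultichoose D (D - r) n) : r ≤ q + 1 := by
  by_contra hcon
  have hcard := hI (D - r)
  rw [shiftedMultichoose_self, shiftedMultichoose_of_lt D (by lia),
    shiftedMultichoose_of_lt D (by lia), shiftedMultichoose_of_lt D (by lia)] at hcard
  have hnext := card_le_ncard_interiorSlice_succ hci hv hl (hfin _)
    (nonempty_of_ncard_ne_zero (by rw [hcard]; simp))
  rw [hI, shiftedMultichoose_succ, shiftedMultichoose_of_lt D (by lia),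
    shiftedMultichoose_of_lt D (by lia), shiftedMultichoose_of_lt D (by lia)] at hnext
  lia

lemma add_one_lt_of_interiorSlice_subset_range [Nontrivial ι] (hci : ConvexIndependent ℝ v)
    (hl : ∀ i, l (v i) = 1) (hc : ∀ i, 0 < c i)
    (hsub : interiorSlice Λ l v (∑ i, c i • v i) 1 ⊆ range v) (hrD : r < D)
    (hI : (interiorSlice Λ l v (∑ i, c i • v i) 1).ncard = shiftedMultichoose D D 1 +
      shiftedMultichoose D (D - p) 1 + shiftedMultichoose D (D - q) 1 +
      shiftedMultichoose D (D - r) 1) : r + 1 < D := by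
  rw [interiorSlice_one_eq_empty hci hl hc hsub, ncard_empty] at hI
  by_contra hcon
  rw [show D - r = 1 by lia, shiftedMultichoose_self] at hI
  lia

lemma two_mul_le_of_isCircuit [DecidableEq ι] {i j i' j' : ι} (h : IsCircuit v i j i' j')
    (hv : ∀ i, v i ∈ Λ) (hl : ∀ i, l (v i) = 1) (hfin : ∀ n, (coneSlice Λ l v n).Finite)
    (hcard : Fintype.card ι = D + 1) (hq : 2 ≤ q) (hqr : q ≤ r)
    (hM : ∀ n, (coneSlice Λ l v n).ncard = shiftedMultichoose D 0 n + shiftedMultichoose D 1 n +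
      shiftedMultichoose D q n + shiftedMultichoose D r n) :
    2 * q ≤ D ∧ (q < r → 2 * q + 1 ≤ D) := by
  have hsub n := natSlice_subset_coneSlice (Λ := Λ) hv hl n
  have hlow : ∀ n < q, coneSlice Λ l v n ⊆ natSlice v n := by
    intro n hn
    refine (eq_of_subset_of_ncard_le (hsub n) ?_ (hfin n)).ge
    rw [hM, h.ncard_natSlice hcard, shiftedMultichoose_of_lt D hn,
      shiftedMultichoose_of_lt D (hn.trans_le hqr), add_zero, add_zero]
  have hdiff := ncard_sdiff_add_ncard_of_subset (hsub q) (hfin q)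
  rw [hM, h.ncard_natSlice hcard, shiftedMultichoose_self] at hdiff
  obtain ⟨x, hx⟩ := nonempty_of_ncard_ne_zero (s := coneSlice Λ l v q \ natSlice v q) (by lia)
  obtain ⟨k, rfl⟩ : ∃ k, q = k + 1 := ⟨q - 1, by lia⟩
  obtain ⟨n, hn, y, hy, hyx⟩ := h.exists_reflection hv hl (hlow k k.lt_succ_self) hx
  have hqn : k + 1 ≤ n := not_lt.1 fun hlt => hy.2 (hlow n hlt hy.1)
  refine ⟨by lia, fun hlt => ?_⟩
  rw [shiftedMultichoose_of_lt D hlt] at hdiff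
  have hne : n ≠ k + 1 := by
    rintro rfl
    exact hyx ((ncard_le_one (hfin _).sdiff).1 (by lia) y hy x hx)
  lia

theorem isAdmissible_of_finrank_lt_card (hspan : Submodule.span ℝ (range v) = ⊤)
    (hcard : Module.finrank ℝ E < Fintype.card ι) (hci : ConvexIndependent ℝ v)
    (hv : ∀ i, v i ∈ Λ) (hl : ∀ i, l (v i) = 1) (hfin : ∀ n, (coneSlice Λ l v n).Finite)
    (hc : ∀ i, 0 < c i) (hp : 1 ≤ p) (hpq : p ≤ q) (hqr : q ≤ r) (hr : r < Module.finrank ℝ E)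
    (hM : ∀ n, (coneSlice Λ l v n).ncard =
      shiftedMultichoose (Module.finrank ℝ E) 0 n + shiftedMultichoose (Module.finrank ℝ E) p n +
      shiftedMultichoose (Module.finrank ℝ E) q n + shiftedMultichoose (Module.finrank ℝ E) r n)
    (hI : ∀ n, (interiorSlice Λ l v (∑ i, c i • v i) n).ncard =
      shiftedMultichoose (Module.finrank ℝ E) (Module.finrank ℝ E) n +
      shiftedMultichoose (Module.finrank ℝ E) (Module.finrank ℝ E - p) n +
      shiftedMultichoose (Module.finrank ℝ E) (Module.finrank ℝ E - q) n +
      shiftedMultichoose (Module.finrank ℝ E) (Module.finrank ℝ E - r) n) :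
    IsAdmissible (Module.finrank ℝ E) p q r := by
  classical
  generalize hD : Module.finrank ℝ E = D at *
  have hsub n : interiorSlice Λ l v (∑ i, c i • v i) n ⊆ coneSlice Λ l v n :=
    interiorSlice_subset_coneSlice (mem_hull_range_iff.2 ⟨c, fun i => (hc i).le, rfl⟩) n
  obtain rfl : p = 1 := eq_one_of_lt_card hci hv hl (hfin 1) hcard hp hpq hqr (hM 1)
  have hrq : r ≤ q + 1 :=
    le_add_one_of_lt_card hci hv hl (fun n => (hfin n).subset (hsub n)) hcard hpq hr hI
  rcases Nat.eq_or_lt_of_le hpq with rfl | hq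
  · unfold IsAdmissible; lia
  have hslice := range_subset_coneSlice_one (Λ := Λ) hv hl
  have hM1 := hM 1
  rw [shiftedMultichoose_succ, shiftedMultichoose_self, shiftedMultichoose_of_lt D hq,
    shiftedMultichoose_of_lt D (hq.trans_le hqr)] at hM1
  have hle := ncard_le_ncard hslice (hfin 1)
  rw [ncard_range_eq_card hci] at hle
  have hcard' : Fintype.card ι = D + 1 := by lia
  have hslice' : range v = coneSlice Λ l v 1 :=
    eq_of_subset_of_ncard_le hslice (by rw [ncard_range_eq_card hci]; lia) (hfin 1)
  have : Nontrivial ι := Fintype.one_lt_card_iff_nontrivial.1 (by lia)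
  have hr' : r + 1 < D := add_one_lt_of_interiorSlice_subset_range hci hl hc (hslice' ▸ hsub 1) hr
    (hI 1)
  rcases Nat.eq_or_lt_of_le hq with rfl | hq2
  · unfold IsAdmissible; lia
  obtain ⟨i, j, i', j', hcirc⟩ := exists_isCircuit (hD ▸ hcard') hspan hci hv hl (hfin 2) (by
    rw [hM, shiftedMultichoose_of_lt D hq2, shiftedMultichoose_of_lt D (hq2.trans_le hqr),
      shiftedMultichoose_succ, hcard', Nat.multichoose_succ_succ, Nat.multichoose_one_right]
    simp [shiftedMultichoose])
  obtain ⟨hle', hlt'⟩ := two_mul_le_of_isCircuit hcirc hv hl hfin hcard' hq hqr hM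
  unfold IsAdmissible
  lia

end NonSimplex

/-! ### Necessity of the inequalities -/

section Necessity

variable {κ : Type*} [Finite κ] [Nonempty κ] {d : ℕ}

lemma finite_halfOpenBox_liftVec {v : κ → Fin d → ℤ} {b : Module.Basis κ ℝ ((Fin d → ℝ) × ℝ)}
    (hb : ⇑b = liftVec v) : (halfOpenBox (intPoints d) b univ).Finite :=
  finite_halfOpenBox univ (fun i => hb ▸ snd_liftVec v i) exists_int_of_mem_intPoints
    (hb ▸ finite_coneSlice_liftVec v)

theorem deltaVec_convexHull_of_basis {v : κ → Fin d → ℤ}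
    {b : Module.Basis κ ℝ ((Fin d → ℝ) × ℝ)} (hb : ⇑b = liftVec v)
    (hfin : (halfOpenBox (intPoints d) b univ).Finite) (m : ℕ) :
    deltaVec (convexHull ℝ (range fun i k => (v i k : ℝ))) d m =
      (hfin.toFinset.val.map fun β => ⌊LinearMap.snd ℝ (Fin d → ℝ) ℝ β⌋₊).count m := by
  have := Fintype.ofFinite κ
  have hcard : Fintype.card κ = d + 1 := by simp [← Module.finrank_eq_card_basis b]
  refine deltaVec_eq_count (fun n => ?_) m
  rw [ehr_convexHull_eq_ncard_coneSlice, ← hb, coneSlice_basis, ncard_setOf_mem_halfOpenCone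
    (fun i => hb ▸ liftVec_mem_intPoints v i) (fun i => hb ▸ snd_liftVec v i)
    exists_int_of_mem_intPoints hfin, Multiset.map_map, hcard]
  rfl

lemma isAdmissible_of_basis {v : κ → Fin d → ℤ} {b : Module.Basis κ ℝ ((Fin d → ℝ) × ℝ)}
    (hb : ⇑b = liftVec v) {p q r : ℕ} (hpq : p ≤ q) (hqr : q ≤ r)
    (hδ : ∀ m, deltaVec (convexHull ℝ (range fun i k => (v i k : ℝ))) d m =
      ({0, p, q, r} : Multiset ℕ).count m) : IsAdmissible (d + 1) p q r := by
  have := Fintype.ofFinite κ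
  have hcard : Fintype.card κ = d + 1 := by simp [← Module.finrank_eq_card_basis b]
  have hfin := finite_halfOpenBox_liftVec hb
  rw [← hcard]
  refine isAdmissible_of_map_halfOpenBox_eq (b := b) (fun i => hb ▸ liftVec_mem_intPoints v i)
    (fun i => hb ▸ snd_liftVec v i) exists_int_of_mem_intPoints hfin hpq hqr ?_
  ext m
  exact_mod_cast (deltaVec_convexHull_of_basis hb hfin m).symm.trans (hδ m)

lemma eq_of_forall_count_eq {H K : Multiset ℕ} (hH : ∀ h ∈ H, h ≤ d) (hK : ∀ h ∈ K, h ≤ d)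
    (h : ∀ m ≤ d, H.count m = K.count m) : H = K := by
  ext m
  by_cases hm : m ≤ d
  · exact h m hm
  · rw [Multiset.count_eq_zero_of_notMem fun hmem => hm (hH m hmem),
      Multiset.count_eq_zero_of_notMem fun hmem => hm (hK m hmem)]

theorem isAdmissible_of_isIntegralPolytope {p q r : ℕ} (hp : 1 ≤ p) (hpq : p ≤ q) (hqr : q ≤ r)
    (hr : r ≤ d) {P : Set (Fin d → ℝ)} (hP : IsIntegralPolytope P d)
    (hδ : ∀ m ≤ d, deltaVec P d m = ({0, p, q, r} : Multiset ℕ).count m) :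
    IsAdmissible (d + 1) p q r := by
  have hfinrank : Module.finrank ℝ ((Fin d → ℝ) × ℝ) = d + 1 := by simp
  obtain ⟨N, v, hN, rfl, hci⟩ := exists_convexIndependent_of_isIntegralPolytope hP
  have hspan : Submodule.span ℝ (range (liftVec v)) = ⊤ := by
    obtain ⟨-, -, -, hdim⟩ := hP
    refine span_range_liftVec_eq_top v ?_
    rwa [← direction_affineSpan, affineSpan_convexHull, direction_affineSpan] at hdim
  obtain ⟨c, hc, hgen⟩ := exists_pos_isGenericFor (liftVec v)
  obtain ⟨H, hHd, hM, hI⟩ := exists_heights (liftVec_mem_intPoints v) (snd_liftVec v)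
    exists_int_of_mem_intPoints (finite_coneSlice_liftVec v) hspan
    (mem_hull_range_iff.2 ⟨c, fun i => (hc i).le, rfl⟩) hgen
  rw [hfinrank] at hHd hM hI
  have hcount := deltaVec_eq_count fun n => (ehr_convexHull_eq_ncard_coneSlice v n).trans (hM n)
  obtain rfl : H = {0, p, q, r} := by
    refine eq_of_forall_count_eq (d := d) (fun h hh => Nat.lt_succ_iff.1 (hHd h hh)) ?_
      fun m hm => by exact_mod_cast (hcount m).symm.trans (hδ m hm)
    simp only [Multiset.insert_eq_cons, Multiset.mem_cons, Multiset.mem_singleton]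
    lia
  rcases (finrank_range_le_card (R := ℝ) (liftVec v)).eq_or_lt with hcard | hcard <;>
    rw [Set.finrank, hspan, finrank_top] at hcard
  · exact isAdmissible_of_basis
      (coe_basisOfTopLeSpanOfCardEqFinrank (liftVec v) hspan.ge hcard.symm) hpq hqr hcount
  · rw [← hfinrank] at hM hI ⊢
    refine isAdmissible_of_finrank_lt_card hspan hcard hci (liftVec_mem_intPoints v)
      (snd_liftVec v) (finite_coneSlice_liftVec v) hc hp hpq hqr (by lia) (fun n => ?_) fun n => ?_
    · rw [hM]; simp [add_assoc]
    · rw [hI]; simp [add_assoc]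

end Necessity

/-! ### Lattice simplices with a cyclic group of box points -/

section CyclicSimplex

variable {d n : ℕ}

lemma snd_sum_smul_liftVec {ι : Type*} [Fintype ι] (v : ι → Fin d → ℤ) (c : ι → ℝ) :
    (∑ i, c i • liftVec v i).2 = ∑ i, c i := by
  simp [Prod.snd_sum, liftVec]

/-- The vertices of a lattice simplex whose box points form a cyclic group of order `n`, generated
by the point with barycentric coordinates `t i / n`, provided that `t 0 = 1` and `n ∣ ∑ i, t i`:
all but the first one are the unit vectors `e_1, …, e_{d-1}` and the origin. -/
def cyclicVertex [NeZero d] (n : ℕ) (t : Fin (d + 1) → ℕ) (i : Fin (d + 1)) (k : Fin d) : ℤ :=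
  (if i = k.castSucc then 1 else 0) +
    if i = 0 then (if k = 0 then (n : ℤ) else 0) - t k.castSucc else 0

variable [NeZero d] {t : Fin (d + 1) → ℕ}

lemma fst_sum_smul_cyclicVertex (c : Fin (d + 1) → ℝ) (k : Fin d) :
    (∑ i, c i • liftVec (cyclicVertex n t) i).1 k =
      c k.castSucc + c 0 * ((if k = 0 then (n : ℝ) else 0) - t k.castSucc) := by
  simp [Prod.fst_sum, Finset.sum_apply, liftVec, cyclicVertex, mul_add, Finset.sum_add_distrib]

lemma linearIndependent_liftVec_cyclicVertex (hn : n ≠ 0) (ht : t 0 = 1) :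
    LinearIndependent ℝ (liftVec (cyclicVertex n t)) := by
  rw [Fintype.linearIndependent_iff]
  intro c hc
  have hfst k := fst_sum_smul_cyclicVertex (n := n) (t := t) c k
  have hsnd := snd_sum_smul_liftVec (cyclicVertex n t) c
  simp only [hc, Prod.fst_zero, Prod.snd_zero, Pi.zero_apply] at hfst hsnd
  have h0 : c 0 = 0 := by
    have : c 0 * n = 0 := by linear_combination -(by simpa [ht] using hfst 0 :
      (0 : ℝ) = c 0 + c 0 * (n - 1))
    exact (mul_eq_zero.1 this).resolve_right (mod_cast hn)
  have hcast : ∀ k : Fin d, c k.castSucc = 0 := fun k => by simpa [h0] using (hfst k).symm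
  refine Fin.lastCases ?_ hcast
  simpa [Fin.sum_univ_castSucc, hcast] using hsnd.symm

lemma exists_fract_eq_of_sum_smul_mem_intPoints (hn : n ≠ 0) (ht : t 0 = 1)
    (hsum : n ∣ ∑ i, t i) {c : Fin (d + 1) → ℝ}
    (hc : ∑ i, c i • liftVec (cyclicVertex n t) i ∈ intPoints d) :
    ∃ j : ℤ, ∀ i, Int.fract (c i) = Int.fract ((j * t i : ℤ) / n : ℝ) := by
  simp only [mem_intPoints, fst_sum_smul_cyclicVertex, snd_sum_smul_liftVec] at hc
  simp only [Int.fract_eq_fract]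
  have hn' : (n : ℝ) ≠ 0 := mod_cast hn
  obtain ⟨s, hs⟩ := hsum
  obtain ⟨hfst, M, hM⟩ := hc
  choose x hx using hfst
  have h0 : c 0 = x 0 / n := by
    rw [eq_div_iff hn', ← hx 0]
    simp only [Fin.castSucc_zero, if_true, ht, Nat.cast_one]
    ring
  have hcast (k : Fin d) : c k.castSucc - (x 0 * t k.castSucc : ℤ) / n =
      (x k - (if k = 0 then x 0 else 0) : ℤ) := by
    have hk := hx k
    rw [h0] at hk
    push_cast
    rw [← hk]
    split_ifs <;> field_simp <;> ring
  have htotal : ∑ i, (c i - (x 0 * t i : ℤ) / n) = M - x 0 * s := by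
    push_cast
    rw [Finset.sum_sub_distrib, hM, ← Finset.sum_div, ← Finset.mul_sum, ← Nat.cast_sum, hs]
    push_cast
    field_simp
  refine ⟨x 0, Fin.lastCases ⟨M - x 0 * s - ∑ k, (x k - if k = 0 then x 0 else 0), ?_⟩
    fun k => ⟨_, hcast k⟩⟩
  rw [Fin.sum_univ_castSucc, Finset.sum_congr rfl fun k _ => hcast k] at htotal
  push_cast at htotal ⊢
  linear_combination htotal

lemma sum_smul_mem_intPoints_of_fract_eq (hn : n ≠ 0) (ht : t 0 = 1) (hsum : n ∣ ∑ i, t i)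
    {c : Fin (d + 1) → ℝ} {j : ℤ}
    (hj : ∀ i, Int.fract (c i) = Int.fract ((j * t i : ℤ) / n : ℝ)) :
    ∑ i, c i • liftVec (cyclicVertex n t) i ∈ intPoints d := by
  simp only [mem_intPoints, fst_sum_smul_cyclicVertex, snd_sum_smul_liftVec]
  have hn' : (n : ℝ) ≠ 0 := mod_cast hn
  obtain ⟨s, hs⟩ := hsum
  choose m hm using fun i => Int.fract_eq_fract.1 (hj i)
  have hc i : c i = j * t i / n + m i := by
    rw [← hm i]
    push_cast
    ring
  refine ⟨fun k => ⟨m k.castSucc + (if k = 0 then j + n * m 0 else 0) - m 0 * t k.castSucc, ?_⟩,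
    j * s + ∑ i, m i, ?_⟩
  · rw [hc, hc, ht]
    push_cast
    split_ifs <;> field_simp <;> ring
  · simp only [hc, Finset.sum_add_distrib, ← Finset.sum_div, ← Finset.mul_sum, ← Nat.cast_sum, hs]
    push_cast
    field_simp

lemma mem_halfOpenBox_cyclicVertex_iff (hn : n ≠ 0) (ht : t 0 = 1) (hsum : n ∣ ∑ i, t i)
    {b : Module.Basis (Fin (d + 1)) ℝ ((Fin d → ℝ) × ℝ)} (hb : ⇑b = liftVec (cyclicVertex n t))
    {x : (Fin d → ℝ) × ℝ} :
    x ∈ halfOpenBox (intPoints d) b univ ↔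
      ∃ j < n, ∑ i, ((j * t i % n : ℕ) / n : ℝ) • b i = x := by
  obtain ⟨c, rfl⟩ : ∃ c : Fin (d + 1) → ℝ, ∑ i, c i • b i = x := ⟨_, b.sum_repr x⟩
  have hmem : ∑ i, c i • liftVec (cyclicVertex n t) i ∈ intPoints d ↔
      ∃ j : ℤ, ∀ i, Int.fract (c i) = Int.fract ((j * t i : ℤ) / n : ℝ) :=
    ⟨exists_fract_eq_of_sum_smul_mem_intPoints hn ht hsum,
      fun ⟨_, hj⟩ => sum_smul_mem_intPoints_of_fract_eq hn ht hsum hj⟩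
  rw [← hb] at hmem
  simp only [mem_halfOpenBox_univ, b.repr_sum_self, hmem, ← Int.fract_eq_self (a := c _), mem_Ico]
  constructor
  · rintro ⟨⟨j, hj⟩, hc⟩
    have hpos := Int.emod_nonneg j (by lia : (n : ℤ) ≠ 0)
    have hlt := Int.emod_lt_of_pos j (by lia : (0 : ℤ) < n)
    refine ⟨(j % n).toNat, by lia, Finset.sum_congr rfl fun i _ => ?_⟩
    have hmod : (((j % n).toNat * t i % n : ℕ) : ℤ) = j * t i % n := by
      push_cast
      rw [Int.toNat_of_nonneg hpos, Int.mul_emod, Int.emod_emod, ← Int.mul_emod]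
    rw [← hc i, hj, Int.fract_div_intCast_eq_div_intCast_mod, ← hmod, Int.cast_natCast]
  · rintro ⟨j, -, hj⟩
    have hc i : c i = (j * t i % n : ℕ) / n := by
      simpa only [b.repr_sum_self] using congrArg (fun x => b.repr x i) hj.symm
    have hfract i : Int.fract (c i) = Int.fract ((j * t i : ℕ) / n : ℝ) := by
      rw [hc, ← Int.fract_div_natCast_eq_div_natCast_mod, Int.fract_fract]
    refine ⟨⟨j, fun i => by rw [hfract]; push_cast; rfl⟩, fun i => ?_⟩
    rw [hfract, Int.fract_div_natCast_eq_div_natCast_mod, hc]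

theorem deltaVec_cyclicVertex (hn : n ≠ 0) (ht : t 0 = 1) (hsum : n ∣ ∑ i, t i) (m : ℕ) :
    deltaVec (convexHull ℝ (range fun i k => (cyclicVertex (d := d) n t i k : ℝ))) d m =
      ((Multiset.range n).map fun j => (∑ i, j * t i % n) / n).count m := by
  let b := basisOfLinearIndependentOfCardEqFinrank (linearIndependent_liftVec_cyclicVertex hn ht)
    (by simp)
  have hb : ⇑b = liftVec (cyclicVertex n t) := coe_basisOfLinearIndependentOfCardEqFinrank _ _
  have hfin := finite_halfOpenBox_liftVec hb
  let β : ℕ → (Fin d → ℝ) × ℝ := fun j => ∑ i, ((j * t i % n : ℕ) / n : ℝ) • b i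
  have hinj : InjOn β (Finset.range n) := by
    intro j hj j' hj' hjj
    have hcoord := congrArg (fun x => b.repr x 0) hjj
    rw [Finset.coe_range, mem_Iio] at hj hj'
    simp only [β, b.repr_sum_self, ht, mul_one, Nat.mod_eq_of_lt hj, Nat.mod_eq_of_lt hj'] at hcoord
    exact Nat.cast_injective ((div_left_inj' (Nat.cast_ne_zero.2 hn)).1 hcoord)
  have hbox : hfin.toFinset = (Finset.range n).image β := by
    ext x
    simp [mem_halfOpenBox_cyclicVertex_iff hn ht hsum hb, β]
  rw [deltaVec_convexHull_of_basis hb hfin m, hbox, Finset.image_val_of_injOn hinj,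
    Multiset.map_map, Finset.range_val]
  congr 2
  refine Multiset.map_congr rfl fun j _ => ?_
  simp only [Function.comp, β, hb, LinearMap.snd_apply, snd_sum_smul_liftVec]
  rw [← Finset.sum_div, ← Nat.cast_sum, Nat.floor_div_eq_div]

end CyclicSimplex

/-! ### Sufficiency of the inequalities -/

section Sufficiency

variable {d : ℕ}

lemma affineIndependent_of_linearIndependent_liftVec {ι : Type*} {v : ι → Fin d → ℤ}
    (h : LinearIndependent ℝ (liftVec v)) : AffineIndependent ℝ fun i k => (v i k : ℝ) := by
  rw [affineIndependent_iff]
  intro s w hw hwv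
  refine linearIndependent_iff'.1 h s w (Prod.ext ?_ ?_)
  · simpa [Prod.fst_sum, liftVec] using hwv
  · simpa [Prod.snd_sum, liftVec] using hw

lemma isIntegralPolytope_convexHull_of_affineIndependent {v : Fin (d + 1) → Fin d → ℤ}
    (hv : AffineIndependent ℝ fun i k => (v i k : ℝ)) :
    IsIntegralPolytope (convexHull ℝ (range fun i k => (v i k : ℝ))) d := by
  classical
  refine ⟨Finset.univ.image v, Finset.univ_nonempty.image v, ?_, ?_⟩
  · rw [Finset.coe_image, Finset.coe_univ, image_univ, ← range_comp]
    rfl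
  · rw [← direction_affineSpan, affineSpan_convexHull, direction_affineSpan]
    exact hv.finrank_vectorSpan (by simp)

/-- The sequence of residues modulo `4` starting with `a` ones, `b` twos and `c` threes, followed
by zeros. -/
def residueBlock (a b c i : ℕ) : ℕ :=
  if i < a then 1 else if i < a + b then 2 else if i < a + b + c then 3 else 0

lemma sum_residueBlock {M : Type*} [AddCommMonoid M] {a b c n : ℕ} (h : a + b + c ≤ n) (F : ℕ → M)
    (hF : F 0 = 0) : ∑ i : Fin n, F (residueBlock a b c i) = a • F 1 + b • F 2 + c • F 3 := by
  obtain ⟨e, rfl⟩ := Nat.exists_eq_add_of_le h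
  rw [Fin.sum_univ_eq_sum_range fun i => F (residueBlock a b c i), Finset.sum_range_add,
    Finset.sum_range_add, Finset.sum_range_add, Finset.sum_eq_card_nsmul (b := F 1),
    Finset.sum_eq_card_nsmul (b := F 2), Finset.sum_eq_card_nsmul (b := F 3),
    Finset.sum_eq_card_nsmul (b := F 0)]
  · simp [hF]
  all_goals
    intro i hi
    rw [Finset.mem_range] at hi
    congr 1
    unfold residueBlock
    split_ifs <;> lia

lemma exists_simplex_deltaVec_eq_count (hd : d ≠ 0) {p q r : ℕ} (hpq : p + 1 ≤ q + r)
    (hr : r ≤ p + q) (hq : 2 * q ≤ p + r) (hpr : p + r ≤ d + 1) :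
    ∃ v : Fin (d + 1) → Fin d → ℤ, AffineIndependent ℝ (fun i k => (v i k : ℝ)) ∧
      ∀ m, deltaVec (convexHull ℝ (range fun i k => (v i k : ℝ))) d m =
        ({0, p, q, r} : Multiset ℕ).count m := by
  have : NeZero d := ⟨hd⟩
  obtain ⟨a, ha⟩ := Nat.exists_eq_add_of_le hpq
  obtain ⟨b, hb⟩ := Nat.exists_eq_add_of_le hq
  obtain ⟨c, hc⟩ := Nat.exists_eq_add_of_le hr
  let t : Fin (d + 1) → ℕ := fun i => residueBlock (a + 1) b c i
  have ht : t 0 = 1 := by simp [t, residueBlock]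
  have hsum (F : ℕ → ℕ) (hF : F 0 = 0) :
      ∑ i, F (t i) = (a + 1) * F 1 + b * F 2 + c * F 3 :=
    sum_residueBlock (by lia) F hF
  have hlin := linearIndependent_liftVec_cyclicVertex four_ne_zero ht
  refine ⟨cyclicVertex 4 t, affineIndependent_of_linearIndependent_liftVec hlin, fun m => ?_⟩
  rw [deltaVec_cyclicVertex four_ne_zero ht ⟨p, by have := hsum id rfl; simp at this; lia⟩]
  have hage (j : ℕ) : (∑ i, j * t i % 4) / 4 =
      ((a + 1) * (j * 1 % 4) + b * (j * 2 % 4) + c * (j * 3 % 4)) / 4 := by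
    rw [hsum (fun m => j * m % 4) (by simp)]
  have hrange : Multiset.range 4 = {0, 1, 2, 3} := rfl
  simp only [hrange, Multiset.insert_eq_cons, Multiset.map_cons, Multiset.map_singleton, hage]
  congr <;> lia

theorem exists_simplex_of_isAdmissible (hd : d ≠ 0) {p q r : ℕ} (hp : 1 ≤ p) (hpq : p ≤ q)
    (hqr : q ≤ r) (h : IsAdmissible (d + 1) p q r) :
    ∃ v : Fin (d + 1) → Fin d → ℤ, AffineIndependent ℝ (fun i k => (v i k : ℝ)) ∧
      ∀ m, deltaVec (convexHull ℝ (range fun i k => (v i k : ℝ))) d m =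
        ({0, p, q, r} : Multiset ℕ).count m := by
  obtain ⟨hr, hpr, -, hq⟩ := h
  by_cases hcase : q + r ≤ d + 1
  · rw [show ({0, p, q, r} : Multiset ℕ) = {0, q, p, r} from
      congrArg (Multiset.cons 0) (Multiset.cons_swap p q {r})]
    exact exists_simplex_deltaVec_eq_count hd (by lia) (by lia) (by lia) hcase
  · exact exists_simplex_deltaVec_eq_count hd (by lia) hr (by lia) hpr

end Sufficiency

lemma count_insert_zero (p q r m : ℕ) :
    ((({0, p, q, r} : Multiset ℕ).count m : ℕ) : ℤ) =
      (if m = 0 then 1 else 0) + (if p = m then 1 else 0) + (if q = m then 1 else 0) +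
        (if r = m then 1 else 0) := by
  simp only [Multiset.insert_eq_cons, Multiset.count_cons, Multiset.count_singleton]
  split_ifs <;> lia

theorem stmt16 (d : ℕ) (hd : 1 ≤ d) (i1 i2 i3 : ℕ)
    (h1 : 1 ≤ i1) (h12 : i1 ≤ i2) (h23 : i2 ≤ i3) (h3d : i3 ≤ d) :
    ((∃ P : Set (Fin d → ℝ), IsIntegralPolytope P d ∧
        ∀ m ≤ d, deltaVec P d m =
          (if m = 0 then 1 else 0) + (if i1 = m then 1 else 0) +
          (if i2 = m then 1 else 0) + (if i3 = m then 1 else 0)) ↔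
      (i3 ≤ i1 + i2 ∧ i1 + i3 ≤ d + 1 ∧ i2 ≤ (d + 1) / 2 ∧
        (2 * i2 ≤ i1 + i3 ∨ i2 + i3 ≤ d + 1))) ∧
    ((i3 ≤ i1 + i2 ∧ i1 + i3 ≤ d + 1 ∧ i2 ≤ (d + 1) / 2 ∧
        (2 * i2 ≤ i1 + i3 ∨ i2 + i3 ≤ d + 1)) →
      ∃ v : Fin (d + 1) → Fin d → ℤ,
        AffineIndependent ℝ (fun p i => (v p i : ℝ)) ∧
        ∀ m ≤ d, deltaVec (convexHull ℝ (Set.range fun p i => ((v p i : ℝ)))) d m =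
          (if m = 0 then 1 else 0) + (if i1 = m then 1 else 0) +
          (if i2 = m then 1 else 0) + (if i3 = m then 1 else 0)) := by
  simp only [← count_insert_zero]
  have hsimplex := exists_simplex_of_isAdmissible (Nat.ne_of_gt hd) h1 h12 h23
  refine ⟨⟨?_, fun h => ?_⟩, fun h => ?_⟩
  · rintro ⟨P, hP, hδ⟩
    exact isAdmissible_of_isIntegralPolytope h1 h12 h23 h3d hP hδ
  · obtain ⟨v, hv, hδ⟩ := hsimplex h
    exact ⟨_, isIntegralPolytope_convexHull_of_affineIndependent hv, fun m _ => hδ m⟩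
  · obtain ⟨v, hv, hδ⟩ := hsimplex h
    exact ⟨v, hv, fun m _ => hδ m⟩
end

section
/- There is no integral polytope of dimension 7 in $\mathbb{R}^7$ whose $\delta$-vector is $(1,0,1,0,1,1,0,0)$, even though this sequence satisfies Stanley's inequalities $\delta_0+\cdots+\delta_i \leq \delta_s+\cdots+\delta_{s-i}$ ($s = \max\{i : \delta_i \neq 0\}$, $0 \leq i \leq \lfloor s/2\rfloor$) and Hibi's inequalities $\delta_{d-1}+\cdots+\delta_{d-i} \leq \delta_2+\cdots+\delta_{i+1}$ ($1 \leq i \leq \lfloor(d-1)/2\rfloor$). However, there does exist an integral polytope of dimension 8 with $\delta$-vector $(1,0,1,0,1,1,0,0,0)$. -/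
open Set Pointwise

/-- The sequence `(1,0,1,0,1,1,0,0,…)`. -/
def dv17 : ℕ → ℤ := fun m => if m = 0 ∨ m = 2 ∨ m = 4 ∨ m = 5 then 1 else 0

/-! If `δ₁ = 0`, then an integral polytope of dimension `d` has only `d + 1` lattice points, so it
is a simplex. A lattice point of the cone over a simplex is uniquely the sum of a lattice point of
the half-open fundamental parallelepiped (a box point) and a nonnegative integral combination of
the rays; hence `δᵢ` counts the box points of height `i`. The box points form a group under
addition modulo `1`, and the heights of two inverse box points add up to the size of their common
support, which is at most `d + 1`. If there are just three nonzero box points, of heights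
`i₁ < i₂ < i₃`, this forces `2 i₂ ≤ i₁ + i₃` or `i₂ + i₃ ≤ d + 1`. Heights `2, 4, 5` violate both in
dimension `7`; in dimension `8` a simplex with cyclic box group of order `4` attains the second. -/

open Function (support)
open Finset.HasAntidiagonal (antidiagonal)

section Convex

variable {ι E : Type*} [Fintype ι] [AddCommGroup E] [Module ℝ E]

lemma convexHull_range_eq_image_stdSimplex (p : ι → E) :
    convexHull ℝ (range p) = Fintype.linearCombination ℝ p '' stdSimplex ℝ ι := by
  classical
  rw [← convexHull_rangle_single_eq_stdSimplex, LinearMap.image_convexHull, ← range_comp]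
  congr 2
  ext j
  simp [Fintype.linearCombination_apply_single]

lemma smul_stdSimplex [Nonempty ι] {t : ℝ} (ht : 0 ≤ t) :
    t • stdSimplex ℝ ι = {c | (∀ j, 0 ≤ c j) ∧ ∑ j, c j = t} := by
  classical
  ext c
  constructor
  · rintro ⟨w, ⟨hw0, hw1⟩, rfl⟩
    exact ⟨fun j => mul_nonneg ht (hw0 j), by simp [← Finset.mul_sum, hw1]⟩
  · rintro ⟨hc0, hct⟩
    rcases ht.eq_or_lt with rfl | ht
    · have hc : c = 0 := funext fun j =>
        (Finset.sum_eq_zero_iff_of_nonneg fun j _ => hc0 j).1 hct j (Finset.mem_univ j)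
      exact ⟨_, single_mem_stdSimplex ℝ (Classical.arbitrary ι), by simp [hc]⟩
    · refine (mem_smul_set_iff_inv_smul_mem₀ ht.ne' _ _).2
        ⟨fun j => mul_nonneg (inv_nonneg.2 ht.le) (hc0 j), ?_⟩
      simp [← Finset.mul_sum, hct, ht.ne']

lemma smul_convexHull_range [Nonempty ι] (p : ι → E) {t : ℝ} (ht : 0 ≤ t) :
    t • convexHull ℝ (range p) =
      Fintype.linearCombination ℝ p '' {c | (∀ j, 0 ≤ c j) ∧ ∑ j, c j = t} := by
  rw [convexHull_range_eq_image_stdSimplex, ← image_smul_set, smul_stdSimplex ht]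

end Convex

/-- The inclusion `ℤ^κ → ℝ^κ` of the lattice points. -/
def latticeVec {κ : Type*} : (κ → ℤ) →+ (κ → ℝ) := (Int.castAddHom ℝ).compLeft κ

@[simp]
lemma latticeVec_apply {κ : Type*} (x : κ → ℤ) (i : κ) : latticeVec x i = x i := rfl

lemma latticeVec_injective {κ : Type*} : Function.Injective (latticeVec (κ := κ)) :=
  Int.cast_injective.comp_left

lemma finite_preimage_latticeVec {κ : Type*} [Finite κ] {K : Set (κ → ℝ)} (hK : IsCompact K) :
    (latticeVec ⁻¹' K).Finite :=
  ((Topology.IsClosedEmbedding.piMap fun _ : κ => Int.isClosedEmbedding_coe_real).isCompact_preimage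
    hK).finite_of_discrete

section Fract

lemma fract_neg_add_self {x : ℝ} (hx : x ∈ Ico (0 : ℝ) 1) :
    Int.fract (-x) + x = if x = 0 then 0 else 1 := by
  split_ifs with h
  · simp [h]
  · rw [Int.fract_neg (by rwa [Int.fract_eq_self.2 hx]), Int.fract_eq_self.2 hx, sub_add_cancel]

lemma eq_zero_of_fract_add_eq {x y : ℝ} (hx : x ∈ Ico (0 : ℝ) 1) (h : Int.fract (y + x) = y) :
    x = 0 := by
  obtain ⟨-, -, z, hz⟩ := Int.fract_eq_iff.1 h
  rw [← Int.fract_eq_self.2 hx, show x = z by linarith, Int.fract_intCast]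

variable {ι : Type*} {c : ι → ℝ}

lemma fract_comp_eq_self (hc : ∀ j, c j ∈ Ico (0 : ℝ) 1) : Int.fract ∘ c = c :=
  funext fun j => Int.fract_eq_self.2 (hc j)

lemma eq_zero_of_fract_add_mem {x y z : ι → ℝ} {t : ι} (hy : ∀ j, y j ∈ Ico (0 : ℝ) 1)
    (hz : ∀ j, z j ∈ Ico (0 : ℝ) 1) (hadd : Int.fract ∘ (y + z) ∈ ({0, x, y, z} : Set (ι → ℝ)))
    (hyt : y t ≠ 0) (hxt : x t = 0) (hzt : z t = 0) : z = 0 := by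
  have ht : (Int.fract ∘ (y + z)) t = y t := by
    simp [hzt, Int.fract_eq_self.2 (hy t)]
  obtain h | h | h | h := hadd
  · exact absurd (by rw [← ht, h, Pi.zero_apply]) hyt
  · exact absurd (by rw [← ht, h, hxt]) hyt
  · exact funext fun j => eq_zero_of_fract_add_eq (hz j) (congrFun h j)
  · exact absurd (by rw [← ht, h, hzt]) hyt

lemma support_fract_neg (hc : ∀ j, c j ∈ Ico (0 : ℝ) 1) :
    support (Int.fract ∘ (-c)) = support c := by
  ext j
  simp [Int.fract_neg_eq_zero, Int.fract_eq_self.2 (hc j)]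

lemma fract_comp_add_natCast (hc : ∀ j, c j ∈ Ico (0 : ℝ) 1) (m : ι →₀ ℕ) :
    (Int.fract ∘ fun j => c j + m j) = c := by
  ext j
  rw [Function.comp_apply, Int.fract_add_natCast, Int.fract_eq_self.2 (hc j)]

lemma injOn_add_natCast :
    InjOn (fun (p : (ι → ℝ) × (ι →₀ ℕ)) j => p.1 j + p.2 j) {p | ∀ j, p.1 j ∈ Ico (0 : ℝ) 1} := by
  rintro ⟨b, m⟩ hb ⟨b', m'⟩ hb' h
  obtain rfl : b = b' := by
    simpa [fract_comp_add_natCast hb, fract_comp_add_natCast hb'] using congrArg (Int.fract ∘ ·) h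
  refine Prod.ext rfl (Finsupp.ext fun j => ?_)
  simpa using congrFun h j

lemma fract_zsmul_div (g : ι → ℤ) (q : ℕ) (r : ℤ) :
    Int.fract ∘ (r • fun j => (g j : ℝ) / q) = fun j => ((r * g j % q : ℤ) : ℝ) / q := by
  ext j
  rw [← Int.fract_div_intCast_eq_div_intCast_mod]
  simp [mul_div_assoc]

end Fract

section Box

variable {N : ℕ} {ι : Type*} [Fintype ι] (v : ι → Fin N → ℤ)

/-- The points of `ℤ × ℤ^N`, in coordinates with respect to the vectors `(1, v j)`: these are the
rays of the cone over the simplex with vertices `v`, and the coordinate sum is the height. -/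
def coneLattice : AddSubgroup (ι → ℝ) :=
  (Int.castAddHom ℝ).range.comap (Fintype.linearCombination ℝ fun _ : ι => (1 : ℝ)).toAddMonoidHom ⊓
    latticeVec.range.comap (Fintype.linearCombination ℝ fun j => latticeVec (v j)).toAddMonoidHom

/-- The lattice points of height `k` in the cone over the simplex with vertices `v`. -/
def coneLevel (k : ℕ) : Set (ι → ℝ) :=
  {c | c ∈ coneLattice v ∧ (∀ j, 0 ≤ c j) ∧ ∑ j, c j = k}

/-- The lattice points of height `k` in the half-open fundamental parallelepiped of the cone over
the simplex with vertices `v`. -/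
def boxLevel (k : ℕ) : Set (ι → ℝ) :=
  {c | c ∈ coneLattice v ∧ (∀ j, c j ∈ Ico (0 : ℝ) 1) ∧ ∑ j, c j = k}

variable {v} {c : ι → ℝ} {k : ℕ}

lemma mem_coneLattice : c ∈ coneLattice v ↔ (∃ z : ℤ, (z : ℝ) = ∑ j, c j) ∧
    ∃ x, latticeVec x = Fintype.linearCombination ℝ (fun j => latticeVec (v j)) c := by
  simp [coneLattice, AddSubgroup.mem_inf, Fintype.linearCombination_apply,
    AddSubgroup.mem_zmultiples_iff]

lemma latticeVec_mem_coneLattice (m : ι → ℤ) : latticeVec m ∈ coneLattice v := by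
  refine mem_coneLattice.2 ⟨⟨∑ j, m j, by simp⟩, ∑ j, m j • v j, ?_⟩
  ext i
  simp [Fintype.linearCombination_apply]

lemma fract_mem_coneLattice (hc : c ∈ coneLattice v) : Int.fract ∘ c ∈ coneLattice v :=
  sub_mem hc (latticeVec_mem_coneLattice fun j => ⌊c j⌋)

lemma exists_fract_mem_boxLevel (hc : c ∈ coneLattice v) : ∃ k, Int.fract ∘ c ∈ boxLevel v k := by
  have hfract := fract_mem_coneLattice hc
  obtain ⟨⟨z, hz⟩, -⟩ := mem_coneLattice.1 hfract
  have hz0 : 0 ≤ z := by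
    exact_mod_cast hz.symm ▸ Finset.sum_nonneg fun j _ => Int.fract_nonneg (c j)
  lift z to ℕ using hz0
  exact ⟨z, hfract, fun j => ⟨Int.fract_nonneg _, Int.fract_lt_one _⟩, by exact_mod_cast hz.symm⟩

lemma lt_card_of_mem_boxLevel [Nonempty ι] (hc : c ∈ boxLevel v k) : k < Fintype.card ι := by
  have : (k : ℝ) < ∑ _j : ι, (1 : ℝ) := by
    rw [← hc.2.2]
    exact Finset.sum_lt_sum_of_nonempty Finset.univ_nonempty fun j _ => (hc.2.1 j).2
  simpa using this

lemma mem_boxLevel_zero : c ∈ boxLevel v 0 ↔ c = 0 := by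
  constructor
  · rintro ⟨-, hc, hsum⟩
    ext j
    exact (Finset.sum_eq_zero_iff_of_nonneg fun j _ => (hc j).1).1 (by simpa using hsum) j
      (Finset.mem_univ j)
  · rintro rfl
    exact ⟨zero_mem _, by simp, by simp⟩

lemma boxLevel_subset_coneLevel (k : ℕ) : boxLevel v k ⊆ coneLevel v k :=
  fun _ hc => ⟨hc.1, fun j => (hc.2.1 j).1, hc.2.2⟩

section Ehrhart

lemma linearCombination_image_coneLevel [Nonempty ι] (n : ℕ) :
    Fintype.linearCombination ℝ (fun j => latticeVec (v j)) '' coneLevel v n =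
      latticeVec ''
        {x | latticeVec x ∈ (n : ℝ) • convexHull ℝ (range fun j => latticeVec (v j))} := by
  ext y
  constructor
  · rintro ⟨c, ⟨hc, hc0, hsum⟩, rfl⟩
    obtain ⟨-, x, hx⟩ := mem_coneLattice.1 hc
    refine ⟨x, ?_, hx⟩
    rw [mem_ofPred_eq, smul_convexHull_range _ n.cast_nonneg, hx]
    exact mem_image_of_mem _ ⟨hc0, hsum⟩
  · rintro ⟨x, hx, rfl⟩
    rw [mem_ofPred_eq, smul_convexHull_range _ n.cast_nonneg] at hx
    obtain ⟨c, ⟨hc0, hsum⟩, hcx⟩ := hx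
    exact ⟨c, ⟨mem_coneLattice.2 ⟨⟨n, by simp [hsum]⟩, x, hcx.symm⟩, hc0, hsum⟩, hcx⟩

lemma injOn_linearCombination_coneLevel (hv : AffineIndependent ℝ fun j => latticeVec (v j))
    (n : ℕ) : InjOn (Fintype.linearCombination ℝ fun j => latticeVec (v j)) (coneLevel v n) :=
  fun _ hc _ hc' h => funext fun j =>
    hv.eq_of_sum_eq_sum (hc.2.2.trans hc'.2.2.symm) h j (Finset.mem_univ j)

lemma ehr_convexHull_range [Nonempty ι] (hv : AffineIndependent ℝ fun j => latticeVec (v j))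
    (n : ℕ) : ehr (convexHull ℝ (range fun j => latticeVec (v j))) n = (coneLevel v n).ncard := by
  rw [← (injOn_linearCombination_coneLevel hv n).ncard_image,
    linearCombination_image_coneLevel, ncard_image_of_injective _ latticeVec_injective]
  rfl

lemma finite_coneLevel [Nonempty ι] (hv : AffineIndependent ℝ fun j => latticeVec (v j)) (n : ℕ) :
    (coneLevel v n).Finite := by
  refine Finite.of_finite_image ?_ (injOn_linearCombination_coneLevel hv n)
  rw [linearCombination_image_coneLevel]
  exact (finite_preimage_latticeVec (((finite_range _).isCompact_convexHull ℝ).smul _)).image _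

lemma finite_boxLevel [Nonempty ι] (hv : AffineIndependent ℝ fun j => latticeVec (v j)) (k : ℕ) :
    (boxLevel v k).Finite :=
  (finite_coneLevel hv k).subset (boxLevel_subset_coneLevel k)

lemma coneLevel_eq_image [DecidableEq ι] (n : ℕ) :
    coneLevel v n = (fun (p : (ι → ℝ) × (ι →₀ ℕ)) j => p.1 j + p.2 j) ''
      ⋃ q ∈ (antidiagonal n : Set (ℕ × ℕ)),
        boxLevel v q.1 ×ˢ ((Finset.univ : Finset ι).finsuppAntidiag q.2 : Set (ι →₀ ℕ)) := by
  ext c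
  simp only [mem_image, mem_iUnion, mem_prod, Finset.mem_coe,
    Finset.HasAntidiagonal.mem_antidiagonal, Finset.mem_finsuppAntidiag, Finset.subset_univ,
    and_true, exists_prop, Prod.exists]
  constructor
  · rintro ⟨hc, hc0, hsum⟩
    obtain ⟨k, hk⟩ := exists_fract_mem_boxLevel hc
    have hdecomp : ∀ j, Int.fract (c j) + (⌊c j⌋₊ : ℝ) = c j := fun j => by
      rw [natCast_floor_eq_intCast_floor (hc0 j), Int.fract_add_floor]
    refine ⟨_, Finsupp.equivFunOnFinite.symm fun j => ⌊c j⌋₊, ⟨k, ∑ j, ⌊c j⌋₊, ?_, hk, rfl⟩,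
      funext hdecomp⟩
    have : (k : ℝ) + ∑ j, (⌊c j⌋₊ : ℝ) = n := by
      rw [← hk.2.2, ← hsum, ← Finset.sum_add_distrib]
      exact Finset.sum_congr rfl fun j _ => hdecomp j
    exact_mod_cast this
  · rintro ⟨b, m, ⟨k, l, rfl, hb, rfl⟩, rfl⟩
    refine ⟨add_mem hb.1 (latticeVec_mem_coneLattice fun j => (m j : ℤ)),
      fun j => add_nonneg (hb.2.1 j).1 (Nat.cast_nonneg _), ?_⟩
    simp [Finset.sum_add_distrib, hb.2.2]

variable {d : ℕ}

lemma ncard_coneLevel (hv : AffineIndependent ℝ fun j => latticeVec (v j))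
    (hι : Fintype.card ι = d + 1) (n : ℕ) :
    (coneLevel v n).ncard =
      ∑ q ∈ antidiagonal n, (boxLevel v q.1).ncard * (d + q.2).choose d := by
  classical
  have : Nonempty ι := Fintype.card_pos_iff.1 (by omega)
  rw [coneLevel_eq_image, (injOn_add_natCast.mono ?_).ncard_image,
    Finite.ncard_biUnion (Finset.finite_toSet _), finsum_mem_coe_finset]
  · refine Finset.sum_congr rfl fun q _ => ?_
    rw [ncard_prod, ncard_coe_finset, Finset.card_finsuppAntidiag_nat_eq_choose, Finset.card_univ,
      hι, add_right_comm, Nat.add_sub_cancel, Nat.choose_symm_add]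
  · exact fun q _ => (finite_boxLevel hv q.1).prod (Finset.finite_toSet _)
  · rintro q hq q' hq' hne
    refine disjoint_left.2 fun p hp hp' => hne ?_
    have hfst : q.1 = q'.1 := by exact_mod_cast hp.1.2.2.symm.trans hp'.1.2.2
    rw [Finset.mem_coe, Finset.HasAntidiagonal.mem_antidiagonal] at hq hq'
    exact Prod.ext hfst (by omega)
  · exact iUnion₂_subset fun q _ p hp => hp.1.2.1

end Ehrhart

open PowerSeries in
lemma coeff_one_sub_X_pow_s17 (d m : ℕ) :
    coeff m ((1 - X : ℤ⟦X⟧) ^ d) = (-1) ^ m * (d.choose m : ℤ) := by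
  have h : (1 - X : ℤ⟦X⟧) ^ d = rescale (-1) (((1 + Polynomial.X) ^ d : Polynomial ℤ) : ℤ⟦X⟧) := by
    simp [sub_eq_add_neg]
  rw [h, coeff_rescale, Polynomial.coeff_coe, Polynomial.coeff_one_add_X_pow]

open PowerSeries in
lemma mk_deltaVec (P : Set (Fin N → ℝ)) (d : ℕ) :
    mk (deltaVec P d) = mk (fun n => (ehr P n : ℤ)) * (1 - X) ^ (d + 1) := by
  ext i
  rw [coeff_mul, Finset.Nat.sum_antidiagonal_eq_sum_range_succ_mk, coeff_mk, deltaVec]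
  refine Finset.sum_congr rfl fun j _ => ?_
  rw [coeff_mk, coeff_one_sub_X_pow_s17, mul_comm]

open PowerSeries in
lemma deltaVec_convexHull_range {d : ℕ} (hv : AffineIndependent ℝ fun j => latticeVec (v j))
    (hι : Fintype.card ι = d + 1) (i : ℕ) :
    deltaVec (convexHull ℝ (range fun j => latticeVec (v j))) d i = (boxLevel v i).ncard := by
  have : Nonempty ι := Fintype.card_pos_iff.1 (by omega)
  have hehr : (mk fun n => (ehr (convexHull ℝ (range fun j => latticeVec (v j))) n : ℤ)) =
      (mk fun k => ((boxLevel v k).ncard : ℤ)) * mk fun n => ((d + n).choose d : ℤ) := by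
    ext n
    simp [coeff_mul, ehr_convexHull_range hv, ncard_coneLevel hv hι]
  have hdelta := mk_deltaVec (convexHull ℝ (range fun j => latticeVec (v j))) d
  rw [hehr, mul_assoc, mk_add_choose_mul_one_sub_pow_eq_one, mul_one] at hdelta
  simpa using congrArg (coeff i) hdelta

section Inverse

lemma sum_fract_neg_add_sum (hc : ∀ j, c j ∈ Ico (0 : ℝ) 1) :
    ∑ j, Int.fract (-c j) + ∑ j, c j = (support c).ncard := by
  classical
  simp [← Finset.sum_add_distrib, fract_neg_add_self (hc _), ncard_eq_toFinset_card',
    Finset.sum_ite, Function.support]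

lemma exists_fract_neg_mem_boxLevel (hc : c ∈ boxLevel v k) (hk : k ≠ 0) :
    ∃ l ≠ 0, Int.fract ∘ (-c) ∈ boxLevel v l ∧ l + k = (support c).ncard := by
  obtain ⟨l, hl⟩ := exists_fract_mem_boxLevel (neg_mem hc.1)
  have hlk : l + k = (support c).ncard := by
    exact_mod_cast hl.2.2 ▸ hc.2.2 ▸ sum_fract_neg_add_sum hc.2.1
  refine ⟨l, ?_, hl, hlk⟩
  rintro rfl
  rw [← support_fract_neg hc.2.1, mem_boxLevel_zero.1 hl, Function.support_zero, ncard_empty] at hlk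
  omega

/-- Write `x`, `y`, `z` for the box points of heights `i₁`, `i₂`, `i₃`, and suppose that the
conclusion fails. Comparing heights, `z` has inverse `x` and `y` is its own inverse, so that `y` has
larger support than `x` and `z`. At a coordinate where only `y` is nonzero, `y + z` agrees with no
box point but `y`, which forces `z = 0`. -/
theorem two_mul_le_or_add_le_card {i₁ i₂ i₃ : ℕ} {x y z : ι → ℝ} (h₁ : 0 < i₁) (h₁₂ : i₁ < i₂)
    (h₂₃ : i₂ < i₃) (hx : boxLevel v i₁ = {x}) (hy : boxLevel v i₂ = {y}) (hz : boxLevel v i₃ = {z})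
    (hbox : ∀ m c, c ∈ boxLevel v m → m ∈ ({0, i₁, i₂, i₃} : Finset ℕ)) :
    2 * i₂ ≤ i₁ + i₃ ∨ i₂ + i₃ ≤ Fintype.card ι := by
  by_contra! ⟨hlt, hcard⟩
  simp only [Finset.mem_insert, Finset.mem_singleton] at hbox
  have hymem : y ∈ boxLevel v i₂ := hy ▸ mem_singleton y
  have hzmem : z ∈ boxLevel v i₃ := hz ▸ mem_singleton z
  have hsupp_le : ∀ c : ι → ℝ, (support c).ncard ≤ Fintype.card ι := fun c =>
    (ncard_le_card _).trans_eq Nat.card_eq_fintype_card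
  obtain ⟨hxz, hz_supp⟩ : support x = support z ∧ (support z).ncard = i₁ + i₃ := by
    obtain ⟨l, hl0, hl, hsum⟩ := exists_fract_neg_mem_boxLevel hzmem (by omega)
    have := hsupp_le z
    obtain rfl : l = i₁ := by have := hbox l _ hl; omega
    rw [hx, mem_singleton_iff] at hl
    exact ⟨hl ▸ support_fract_neg hzmem.2.1, hsum.symm⟩
  have hy_supp : (support y).ncard = 2 * i₂ := by
    obtain ⟨l, hl0, hl, hsum⟩ := exists_fract_neg_mem_boxLevel hymem (by omega)
    have := hsupp_le y
    have hl₁ : l ≠ i₁ := by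
      rintro rfl
      rw [hx, mem_singleton_iff] at hl
      rw [← support_fract_neg hymem.2.1, hl, hxz] at hsum
      omega
    have := hbox l _ hl
    omega
  obtain ⟨t, hty, htz⟩ : ∃ t ∈ support y, t ∉ support z :=
    exists_mem_notMem_of_ncard_lt_ncard (by omega)
  obtain ⟨m, hm⟩ := exists_fract_mem_boxLevel (add_mem hymem.1 hzmem.1)
  have hadd : Int.fract ∘ (y + z) ∈ ({0, x, y, z} : Set (ι → ℝ)) := by
    obtain rfl | rfl | rfl | rfl := hbox m _ hm <;> simp_all [mem_boxLevel_zero]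
  have hz0 : z = 0 := eq_zero_of_fract_add_mem hymem.2.1 hzmem.2.1 hadd hty
    (Function.notMem_support.1 (hxz ▸ htz)) (Function.notMem_support.1 htz)
  rw [hz0, Function.support_zero, ncard_empty] at hz_supp
  omega

end Inverse

end Box

section Polytope

variable {N d : ℕ} {P : Set (Fin N → ℝ)}

lemma isIntegralPolytope_convexHull_range {ι : Type*} [Fintype ι] {v : ι → Fin N → ℤ}
    (hv : AffineIndependent ℝ fun j => latticeVec (v j)) (hι : Fintype.card ι = d + 1) :
    IsIntegralPolytope (convexHull ℝ (range fun j => latticeVec (v j))) d := by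
  classical
  have : Nonempty ι := Fintype.card_pos_iff.1 (by omega)
  refine ⟨Finset.univ.image v, Finset.univ_nonempty.image v, ?_, ?_⟩
  · rw [Finset.coe_image, Finset.coe_univ, image_univ, ← range_comp]
    rfl
  · rw [← direction_affineSpan, affineSpan_convexHull, direction_affineSpan]
    exact hv.finrank_vectorSpan hι

lemma ehr_zero (hP : P.Nonempty) : ehr P 0 = 1 := by
  have : {x : Fin N → ℤ | (fun i => (x i : ℝ)) ∈ ((0 : ℕ) : ℝ) • P} = {0} := by
    ext x
    simp [zero_smul_set hP, funext_iff]
  rw [ehr, this, ncard_singleton]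

lemma deltaVec_one (hP : P.Nonempty) (d : ℕ) : deltaVec P d 1 = ehr P 1 - (d + 1) := by
  simp only [deltaVec, Finset.sum_range_succ, Finset.sum_range_zero, ehr_zero hP, Nat.sub_zero,
    Nat.sub_self, Nat.choose_one_right, Nat.choose_zero_right]
  push_cast
  ring

lemma IsIntegralPolytope.exists_simplex (hP : IsIntegralPolytope P d) (h1 : deltaVec P d 1 = 0) :
    ∃ v : Fin (d + 1) → Fin N → ℤ, AffineIndependent ℝ (fun j => latticeVec (v j)) ∧
      P = convexHull ℝ (range fun j => latticeVec (v j)) := by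
  obtain ⟨V, hV, hPV, hdim⟩ := hP
  have hVP : latticeVec '' V ⊆ P := hPV ▸ subset_convexHull ℝ _
  have hehr : ehr P 1 = d + 1 := by
    rw [deltaVec_one ((hV.to_set.image _).mono hVP)] at h1
    omega
  have hle : V.card ≤ d + 1 := by
    rw [← hehr, ehr, ← ncard_coe_finset]
    refine ncard_le_ncard (fun z hz => ?_) (finite_of_ncard_ne_zero (by rw [← ehr]; omega))
    rw [mem_ofPred_eq, Nat.cast_one, one_smul]
    exact hVP (mem_image_of_mem _ hz)
  have hrange : P = convexHull ℝ (range fun z : V => latticeVec (z : Fin N → ℤ)) := by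
    rw [hPV, image_eq_range]
    rfl
  rw [hrange, ← direction_affineSpan, affineSpan_convexHull, direction_affineSpan] at hdim
  have : Nonempty V := hV.to_subtype
  have hge : d + 1 ≤ V.card := by
    simpa [hdim] using finrank_vectorSpan_range_add_one_le ℝ fun z : V => latticeVec z.1
  let e : Fin (d + 1) ≃ V := (V.equivFinOfCardEq (hle.antisymm hge)).symm
  have hV_indep : AffineIndependent ℝ fun z : V => latticeVec z.1 :=
    (affineIndependent_iff_finrank_vectorSpan_eq ℝ _ (by simp [hle.antisymm hge])).2 hdim
  refine ⟨fun j => e j, hV_indep.comp_embedding e.toEmbedding, ?_⟩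
  rw [hrange, ← e.surjective.range_comp]
  rfl

theorem IsIntegralPolytope.two_mul_le_or_add_le (hP : IsIntegralPolytope P d) {i₁ i₂ i₃ : ℕ}
    (h₁ : 1 < i₁) (h₁₂ : i₁ < i₂) (h₂₃ : i₂ < i₃) (h₃ : i₃ ≤ d)
    (hδ : ∀ m ≤ d, deltaVec P d m = if m ∈ ({0, i₁, i₂, i₃} : Finset ℕ) then 1 else 0) :
    2 * i₂ ≤ i₁ + i₃ ∨ i₂ + i₃ ≤ d + 1 := by
  obtain ⟨v, hv, rfl⟩ := hP.exists_simplex <| by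
    rw [hδ 1 (by omega), if_neg]
    simp only [Finset.mem_insert, Finset.mem_singleton]
    omega
  have hbox : ∀ m ≤ d, (boxLevel v m).ncard = if m ∈ ({0, i₁, i₂, i₃} : Finset ℕ) then 1 else 0 :=
    fun m hm => by
      have := hδ m hm
      rw [deltaVec_convexHull_range hv (Fintype.card_fin _)] at this
      exact_mod_cast this
  have hsingleton : ∀ m ≤ d, m ∈ ({0, i₁, i₂, i₃} : Finset ℕ) → ∃ c, boxLevel v m = {c} :=
    fun m hm hmem => ncard_eq_one.1 (by rw [hbox m hm, if_pos hmem])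
  obtain ⟨x, hx⟩ := hsingleton i₁ (by omega) (by simp)
  obtain ⟨y, hy⟩ := hsingleton i₂ (by omega) (by simp)
  obtain ⟨z, hz⟩ := hsingleton i₃ h₃ (by simp)
  have hheight : ∀ m c, c ∈ boxLevel v m → m ∈ ({0, i₁, i₂, i₃} : Finset ℕ) := fun m c hc => by
    have hm : m ≤ d := Nat.lt_succ_iff.1 (by simpa using lt_card_of_mem_boxLevel hc)
    by_contra hmem
    have := (ncard_eq_zero (finite_boxLevel hv m)).1 (by rw [hbox m hm, if_neg hmem])
    exact notMem_empty c (this ▸ hc)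
  simpa using two_mul_le_or_add_le_card (by omega) h₁₂ h₂₃ hx hy hz hheight

end Polytope

section CyclicBox

variable {N : ℕ} {ι : Type*} [Fintype ι] {v : ι → Fin N → ℤ} {g : ι → ℤ} {c : ι → ℝ} {q k : ℕ}

lemma mem_boxLevel_iff_of_cyclic (hq : 0 < q)
    (hv : coneLattice v = .zmultiples (fun j => (g j : ℝ) / q) ⊔ (latticeVec (κ := ι)).range) :
    c ∈ boxLevel v k ↔ ∃ r < q, ∑ j, (r : ℤ) * g j % q = q * k ∧
      (fun j => ((r * g j % q : ℤ) : ℝ) / q) = c := by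
  have hsum_iff : ∀ r : ℕ, ∑ j, ((r * g j % q : ℤ) : ℝ) / q = k ↔ ∑ j, (r : ℤ) * g j % q = q * k :=
    fun r => by
      rw [← Finset.sum_div, div_eq_iff (by positivity), mul_comm (k : ℝ)]
      norm_cast
  constructor
  · rintro ⟨hc, hc01, hsum⟩
    rw [hv, AddSubgroup.mem_sup] at hc
    obtain ⟨_, ⟨r, rfl⟩, _, ⟨m, rfl⟩, rfl⟩ := hc
    lift r % q to ℕ using r.emod_nonneg (by omega) with s hs
    have hc : (fun j => ((s * g j % q : ℤ) : ℝ) / q) =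
        r • (fun j => (g j : ℝ) / q) + latticeVec m := by
      rw [← fract_comp_eq_self hc01]
      ext j
      have := congrFun (fract_zsmul_div g q r) j
      simp only [Function.comp_apply, Pi.add_apply, latticeVec_apply,
        Int.fract_add_intCast] at this ⊢
      rw [this, hs, Int.mul_emod, Int.emod_emod, ← Int.mul_emod]
    refine ⟨s, ?_, (hsum_iff s).1 ?_, hc⟩
    · have := r.emod_lt_of_pos (by omega : (0 : ℤ) < q)
      omega
    · rw [← hsum]
      exact Finset.sum_congr rfl fun j _ => congrFun hc j
  · rintro ⟨r, -, hsum, rfl⟩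
    refine ⟨?_, fun j => ?_, (hsum_iff r).2 hsum⟩
    · rw [← fract_zsmul_div]
      refine fract_mem_coneLattice (hv ▸ AddSubgroup.mem_sup_left ?_)
      exact zsmul_mem (AddSubgroup.mem_zmultiples _) _
    · rw [← fract_zsmul_div]
      exact ⟨Int.fract_nonneg _, Int.fract_lt_one _⟩

lemma ncard_boxLevel_of_cyclic (hq : 0 < q)
    (hv : coneLattice v = .zmultiples (fun j => (g j : ℝ) / q) ⊔ (latticeVec (κ := ι)).range)
    {l : ι} (hl : g l = 1) (k : ℕ) :
    (boxLevel v k).ncard =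
      ({r ∈ Finset.range q | ∑ j, (r : ℤ) * g j % q = q * k} : Finset ℕ).card := by
  have himage : boxLevel v k = (fun (r : ℕ) j => ((r * g j % q : ℤ) : ℝ) / q) ''
      ({r ∈ Finset.range q | ∑ j, (r : ℤ) * g j % q = q * k} : Finset ℕ) := by
    ext c
    simp [mem_boxLevel_iff_of_cyclic hq hv, and_assoc]
  rw [himage, InjOn.ncard_image, ncard_coe_finset]
  intro r hr r' hr' h
  have hmod : (r * g l % q : ℤ) = r' * g l % q := by
    exact_mod_cast (div_left_inj' (by positivity : (q : ℝ) ≠ 0)).1 (congrFun h l)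
  simp only [Finset.coe_filter, Finset.mem_range, mem_ofPred_eq] at hr hr'
  rw [hl, mul_one, mul_one] at hmod
  exact Nat.ModEq.eq_of_lt_of_lt (by exact_mod_cast hmod) hr.1 hr'.1

end CyclicBox

section CyclicSimplex

variable {N : ℕ}

/-- The lattice simplex with vertices `0`, the unit vectors `e k` for `k ≠ l`, and
`q e l - ∑ k ≠ l, a k e k`. If `a l = 1`, then `e l` is `1 / q` times the combination of the nonzero
vertices with coefficients `a`, so that the box points form a cyclic group of order `q`. -/
def cyclicSimplex (l : Fin N) (a : Fin N → ℤ) (q : ℕ) : Option (Fin N) → Fin N → ℤ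
  | none => 0
  | some k => if k = l then Function.update (-a) l q else Pi.single k 1

/-- The extension of the weights `a` to the vertex `0` of `cyclicSimplex` for which all weights sum
to `0`. -/
def balancedWeight (a : Fin N → ℤ) (j : Option (Fin N)) : ℤ :=
  j.elim (-∑ k, a k) a

lemma linearCombination_cyclicSimplex (l : Fin N) (a : Fin N → ℤ) (q : ℕ)
    (c : Option (Fin N) → ℝ) (k : Fin N) :
    Fintype.linearCombination ℝ (fun j => latticeVec (cyclicSimplex l a q j)) c k =
      if k = l then c (some l) * q else c (some k) - c (some l) * a k := by
  have hvertex : ∀ m, (cyclicSimplex l a q (some m) k : ℝ) = if k = l then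
      (if m = l then (q : ℝ) else 0) else (if k = m then 1 else 0) - if m = l then a k else 0 :=
    fun m => by
      simp only [cyclicSimplex]
      split_ifs <;> simp_all
  simp only [Fintype.linearCombination_apply, Fintype.sum_option, Finset.sum_apply,
    Pi.smul_apply, latticeVec_apply, hvertex, smul_eq_mul]
  by_cases hk : k = l <;> simp [hk, mul_sub, cyclicSimplex]

lemma affineIndependent_cyclicSimplex (l : Fin N) (a : Fin N → ℤ) {q : ℕ} (hq : 0 < q) :
    AffineIndependent ℝ fun j => latticeVec (cyclicSimplex l a q j) := by
  rw [affineIndependent_iff_of_fintype]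
  intro w hw h
  rw [Finset.weightedVSub_eq_linear_combination _ hw, ← Fintype.linearCombination_apply] at h
  have hl : w (some l) = 0 := by
    simpa [linearCombination_cyclicSimplex, hq.ne'] using congrFun h l
  have hsome : ∀ k, w (some k) = 0 := fun k => by
    by_cases hk : k = l
    · rw [hk, hl]
    · simpa [linearCombination_cyclicSimplex, hk, hl] using congrFun h k
  have hnone : w none = 0 := by simpa [Fintype.sum_option, hsome] using hw
  exact fun j => j.rec hnone hsome

lemma sum_balancedWeight (a : Fin N → ℤ) : ∑ j, balancedWeight a j = 0 := by
  simp [Fintype.sum_option, balancedWeight]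

lemma balancedWeight_div_mem_coneLattice {l : Fin N} {a : Fin N → ℤ} (hl : a l = 1) {q : ℕ}
    (hq : 0 < q) : (fun j => (balancedWeight a j : ℝ) / q) ∈ coneLattice (cyclicSimplex l a q) := by
  refine mem_coneLattice.2 ⟨⟨0, ?_⟩, Pi.single l 1, ?_⟩
  · rw [← Finset.sum_div, ← Int.cast_sum, sum_balancedWeight, Int.cast_zero, zero_div]
  · ext k
    rw [linearCombination_cyclicSimplex]
    by_cases hk : k = l
    · simp [hk, balancedWeight, hl, hq.ne']
    · simp [hk, balancedWeight, hl, div_eq_inv_mul]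

lemma mem_range_latticeVec_of_eq_zero {l : Fin N} {a : Fin N → ℤ} {q : ℕ}
    {c : Option (Fin N) → ℝ} (hc : c ∈ coneLattice (cyclicSimplex l a q)) (hl : c (some l) = 0) :
    c ∈ latticeVec.range := by
  obtain ⟨⟨z, hz⟩, x, hx⟩ := mem_coneLattice.1 hc
  have hsome : ∀ k, (x k : ℝ) = c (some k) := fun k => by
    rw [← latticeVec_apply, hx, linearCombination_cyclicSimplex]
    split_ifs with hk <;> simp [hk, hl]
  have hnone : ((z - ∑ k, x k : ℤ) : ℝ) = c none := by
    simp [hz, Fintype.sum_option, hsome]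
  exact ⟨fun j => j.elim (z - ∑ k, x k) x, funext fun j => j.rec hnone hsome⟩

lemma coneLattice_cyclicSimplex {l : Fin N} {a : Fin N → ℤ} (hl : a l = 1) {q : ℕ} (hq : 0 < q) :
    coneLattice (cyclicSimplex l a q) =
      .zmultiples (fun j => (balancedWeight a j : ℝ) / q) ⊔ latticeVec.range := by
  have hgen := balancedWeight_div_mem_coneLattice hl hq
  refine le_antisymm (fun c hc => ?_) (sup_le ?_ ?_)
  · obtain ⟨-, x, hx⟩ := mem_coneLattice.1 hc
    have hxl : (x l : ℝ) = c (some l) * q := by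
      rw [← latticeVec_apply, hx, linearCombination_cyclicSimplex, if_pos rfl]
    rw [← add_sub_cancel (x l • fun j => (balancedWeight a j : ℝ) / q) c]
    refine add_mem (AddSubgroup.mem_sup_left (zsmul_mem (AddSubgroup.mem_zmultiples _) _))
      (AddSubgroup.mem_sup_right (mem_range_latticeVec_of_eq_zero
        (sub_mem hc (zsmul_mem hgen _)) ?_))
    simp [balancedWeight, hl, hxl, hq.ne']
  · exact AddSubgroup.zmultiples_le_of_mem hgen
  · rintro _ ⟨m, rfl⟩
    exact latticeVec_mem_coneLattice m

theorem deltaVec_cyclicSimplex {l : Fin N} {a : Fin N → ℤ} (hl : a l = 1) {q : ℕ} (hq : 0 < q)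
    (k : ℕ) :
    deltaVec (convexHull ℝ (range fun j => latticeVec (cyclicSimplex l a q j))) N k =
      ({r ∈ Finset.range q | ∑ j, (r : ℤ) * balancedWeight a j % q = q * k} : Finset ℕ).card := by
  rw [deltaVec_convexHull_range (affineIndependent_cyclicSimplex l a hq) (by simp),
    ncard_boxLevel_of_cyclic hq (coneLattice_cyclicSimplex hl hq) (l := some l) hl]

end CyclicSimplex

theorem stmt17 :
    -- the sequence satisfies Stanley's inequalities (with s = 5)
    (∀ i ≤ 5 / 2, ∑ j ∈ Finset.range (i + 1), dv17 j ≤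
      ∑ j ∈ Finset.range (i + 1), dv17 (5 - j)) ∧
    -- the sequence satisfies Hibi's inequalities (with d = 7)
    (∀ i, 1 ≤ i → i ≤ (7 - 1) / 2 →
      ∑ j ∈ Finset.range i, dv17 (7 - 1 - j) ≤ ∑ j ∈ Finset.range i, dv17 (2 + j)) ∧
    -- yet (1,0,1,0,1,1,0,0) is not the δ-vector of a 7-dimensional integral polytope
    (¬ ∃ P : Set (Fin 7 → ℝ), IsIntegralPolytope P 7 ∧
        ∀ m ≤ 7, deltaVec P 7 m = dv17 m) ∧
    -- while (1,0,1,0,1,1,0,0,0) is the δ-vector of an 8-dimensional integral polytope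
    (∃ P : Set (Fin 8 → ℝ), IsIntegralPolytope P 8 ∧
        ∀ m ≤ 8, deltaVec P 8 m = dv17 m) := by
  refine ⟨by decide, by decide, ?_, ?_⟩
  · rintro ⟨P, hP, hδ⟩
    have := hP.two_mul_le_or_add_le (i₁ := 2) (i₂ := 4) (i₃ := 5) (by omega) (by omega) (by omega)
      (by omega) fun m hm => by simp [hδ m hm, dv17]
    omega
  -- The box group is `ℤ / 4`: a generator has height 4, its inverse height 5, its double height 2.
  · have hv := affineIndependent_cyclicSimplex 7 ![1, 1, 3, 2, 2, 2, 2, 1] (q := 4) (by omega)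
    refine ⟨_, isIntegralPolytope_convexHull_range hv (by simp), fun m hm => ?_⟩
    rw [deltaVec_cyclicSimplex rfl (by omega)]
    interval_cases m <;> decide
end
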